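/- arXiv:2509.04271 — 2 statements merged into one kernel-verified Lean document; each statement's English description precedes it below -/
import Mathlib

section
/- For every integer d ≥ 0 and all α, ε ∈ (0,1) there is a constant C = C(d,α,ε) such that the following holds. Let G be a finite group and A ⊆ G a nonempty set with max(VC^ℓ_A(A), VC^r_A(A)) ≤ d and |A| ≥ α|G|. Then there is a (δ,m,n)-Bohr neighborhood B in G with max{1/δ, m, n} ≤ C and B ⊆ St^r_ε(A) satisfying: (i) there is a set F ⊆ A with |F| ≤ C such that |A △ FB| < ε|A|; and (ii) |Z^ℓ_ε(A,B)| ≤ ε|A|. -/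
open scoped Pointwise symmDiff

/-- `Stab^ℓ_N(A) = {x : |xA △ A| ≤ N}`. -/
def stabL {G : Type*} [Group G] (A : Set G) (N : ℝ) : Set G :=
  {x : G | (((x • A) ∆ A).ncard : ℝ) ≤ N}

/-- `Stab^r_N(A) = {x : |Ax △ A| ≤ N}`. -/
def stabR {G : Type*} [Group G] (A : Set G) (N : ℝ) : Set G :=
  {x : G | (((A * {x}) ∆ A).ncard : ℝ) ≤ N}

/-- `St^ℓ_ε(A) = Stab^ℓ_{ε|A|}(A)`. -/
def stL {G : Type*} [Group G] (A : Set G) (ε : ℝ) : Set G := stabL A (ε * A.ncard)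

/-- `St^r_ε(A) = Stab^r_{ε|A|}(A)`. -/
def stR {G : Type*} [Group G] (A : Set G) (ε : ℝ) : Set G := stabR A (ε * A.ncard)

/-- A family of sets shatters `S` if every subset of `S` is cut out by a member of the family. -/
def Shatters {α : Type*} (F : Set (Set α)) (S : Set α) : Prop :=
  ∀ T ⊆ S, ∃ f ∈ F, S ∩ f = T

/-- VC-dimension of a set system: the supremum of cardinalities of finite shattered sets. -/
noncomputable def vcDim {α : Type*} (F : Set (Set α)) : ℕ∞ :=
  ⨆ (S : Finset α) (_ : Shatters F ↑S), (S.card : ℕ∞)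

/-- The family of left translates `{xA : x ∈ B}`. -/
def leftFam {G : Type*} [Group G] (A B : Set G) : Set (Set G) := (fun x => x • A) '' B

/-- The family of right translates `{Ax : x ∈ B}`. -/
def rightFam {G : Type*} [Group G] (A B : Set G) : Set (Set G) := (fun x => A * {x}) '' B

/-- `Z^ℓ_ε(A,X) = {g : min(|gX ∩ A|, |gX \ A|) ≥ ε|X|}`. -/
def Zl {G : Type*} [Group G] (A X : Set G) (ε : ℝ) : Set G :=
  {g : G | ε * X.ncard ≤ min (((g • X) ∩ A).ncard : ℝ) (((g • X) \ A).ncard : ℝ)}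

/-- The distance on the unitary group `U(m)` induced by the `L²`-operator norm on matrices. -/
noncomputable def uDist (m : ℕ) (u v : Matrix.unitaryGroup (Fin m) ℂ) : ℝ :=
  ‖Matrix.toEuclideanCLM (𝕜 := ℂ) (n := Fin m)
      ((u : Matrix (Fin m) (Fin m) ℂ) - (v : Matrix (Fin m) (Fin m) ℂ))‖

/-- A `(δ,m,n)`-Bohr neighborhood in `G`: `B = τ⁻¹(U ∩ K)` where `τ : G → U(m)` is a
homomorphism, `U` is the open ball of radius `δ` around the identity (operator-norm metric),
and `K` is a normal subgroup of `τ(G)` of index `n` consisting of diagonal matrices. -/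
def IsBohrNbhd {G : Type*} [Group G] (δ : ℝ) (m n : ℕ) (B : Set G) : Prop :=
  ∃ (τ : G →* Matrix.unitaryGroup (Fin m) ℂ)
    (K : Subgroup (Matrix.unitaryGroup (Fin m) ℂ)),
    K ≤ τ.range ∧ (K.subgroupOf τ.range).Normal ∧ (K.subgroupOf τ.range).index = n ∧
    (∀ u ∈ K, Matrix.IsDiag (u : Matrix (Fin m) (Fin m) ℂ)) ∧
    B = {g : G | τ g ∈ K ∧ uDist m (τ g) 1 < δ}

/-!
Small VC-dimension of the right translates of `A` makes a positive proportion of all `x` satisfy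
`‖ρ x 1_A - 1_A‖ ≤ η ‖1_A‖`, where `ρ` is the right regular representation on `ℓ²(G)`: by
Haussler's sampling argument, boundedly many translates of `A` approximate all the others. The
frame operator `∑ₓ ⟪ρ x 1_A, ·⟫ • ρ x 1_A` commutes with `ρ` and has trace `|G| ‖1_A‖²`, so its
large eigenvalues span an invariant subspace of bounded dimension `m`. This subspace carries almost
all of `1_A`, because a component `v` of `1_A` orthogonal to it would have small inner product with
most `ρ x 1_A`, yet `⟪ρ x 1_A, v⟫` is close to `‖v‖²` for the almost-stabilizing `x`. Restricting
`ρ` to it yields `τ : G → U(m)` such that `|Ax ∆ A|` is small whenever `τ x` is close to `1`.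

In a finite subgroup of `U(m)` the elements near `1` commute, because commutators contract towards
`1`. The abelian normal subgroup they generate has bounded index, because `U(m)` is covered by
boundedly many small balls, and it is diagonal in some orthonormal basis. Together with the ball
of radius `δ` it defines a Bohr neighborhood `B ⊆ St^r_θ(A)` of positive density.

Averaging `|Ax ∆ A| ≤ θ |A|` over `x ∈ B` shows that for most `g` the translate `gB` is almost
inside `A` or almost disjoint from it. Choosing greedily translates `fB` almost inside `A`, each
covering many new points of `A`, gives `F`.
-/

section SimultaneousDiagonalization

open Matrix ComplexStarModule

variable {𝕜 : Type*} [RCLike 𝕜]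

theorem exists_orthonormalBasis_forall_eigenvector {E ι n : Type*} [NormedAddCommGroup E]
    [InnerProductSpace 𝕜 E] [FiniteDimensional 𝕜 E] [Fintype n]
    (hn : Module.finrank 𝕜 E = Fintype.card n) {T : ι → Module.End 𝕜 E}
    (hT : ∀ i, (T i).IsSymmetric) (hcomm : Pairwise (Function.onFun Commute T)) :
    ∃ b : OrthonormalBasis n 𝕜 E, ∀ i k, ∃ μ : 𝕜, T i (b k) = μ • b k := by
  classical
  let V : (ι → 𝕜) → Submodule 𝕜 E := fun χ => ⨅ i, Module.End.eigenspace (T i) (χ i)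
  have hV : OrthogonalFamily 𝕜 (fun χ => V χ) fun χ => (V χ).subtypeₗᵢ :=
    LinearMap.IsSymmetric.orthogonalFamily_iInf_eigenspaces hT
  have : Fintype {χ // V χ ≠ ⊥} :=
    (WellFoundedGT.finite_ne_bot_of_iSupIndep hV.independent).fintype
  have hW : OrthogonalFamily 𝕜 (fun χ : {χ // V χ ≠ ⊥} => V χ) fun χ => (V χ).subtypeₗᵢ :=
    hV.comp Subtype.val_injective
  have hinternal : DirectSum.IsInternal fun χ : {χ // V χ ≠ ⊥} => V χ :=
    DirectSum.isInternal_ne_bot_iff.2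
      (LinearMap.IsSymmetric.directSum_isInternal_of_pairwise_commute hT hcomm)
  refine ⟨(hinternal.subordinateOrthonormalBasis hn hW).reindex (Fintype.equivFin n).symm,
    fun i k => ?_⟩
  have hk := hinternal.subordinateOrthonormalBasis_subordinate hn (Fintype.equivFin n k) hW
  exact ⟨_, by
    simpa using Module.End.mem_eigenspace_iff.1 ((Submodule.mem_iInf _).1 hk i)⟩

variable {n : Type*} [Fintype n] [DecidableEq n]

theorem exists_unitary_isDiag_of_isHermitian {S : Set (Matrix n n 𝕜)}
    (hS : ∀ M ∈ S, M.IsHermitian) (hcomm : S.Pairwise Commute) :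
    ∃ U : unitaryGroup n 𝕜, ∀ M ∈ S, (star (U : Matrix n n 𝕜) * M * U).IsDiag := by
  obtain ⟨b, hb⟩ := exists_orthonormalBasis_forall_eigenvector (n := n) (ι := S)
    (T := fun M => toEuclideanLin M.1) (by simp)
    (fun M => isSymmetric_toEuclideanLin_iff.2 (hS M M.2))
    (fun M N hMN => (hcomm M.2 N.2 (Subtype.coe_ne_coe.2 hMN)).map (toLpLinAlgEquiv 2))
  let U := (EuclideanSpace.basisFun n 𝕜).toBasis.toMatrix b
  have hU : U ∈ unitaryGroup n 𝕜 :=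
    (EuclideanSpace.basisFun n 𝕜).toMatrix_orthonormalBasis_mem_unitary b
  refine ⟨⟨U, hU⟩, fun M hM => ?_⟩
  choose μ hμ using fun k => hb ⟨M, hM⟩ k
  have hMU : M * U = U * diagonal μ := by
    ext i k
    have h : (M *ᵥ (b k).ofLp) i = μ k * b k i := congrArg (fun v => v.ofLp i) (hμ k)
    rwa [mul_diagonal, mul_comm]
  rw [mul_assoc, hMU, ← mul_assoc, mem_unitaryGroup_iff'.1 hU, one_mul]
  exact isDiag_diagonal μ

open scoped Matrix.Norms.L2Operator in
theorem exists_unitary_isDiag_of_isStarNormal {S : Set (Matrix n n ℂ)}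
    (hS : ∀ M ∈ S, IsStarNormal M) (hcomm : S.Pairwise Commute) :
    ∃ U : unitaryGroup n ℂ, ∀ M ∈ S, (star (U : Matrix n n ℂ) * M * U).IsDiag := by
  have : IsMulCommutative (StarAlgebra.adjoin ℂ S) :=
    StarAlgebra.isMulCommutative_adjoin ℂ
      (fun M hM N hN => hcomm.of_refl hM hN)
      (fun M hM N hN => ((hS N hN).commute_star_right (hcomm.of_refl hN hM).symm))
  obtain ⟨U, hU⟩ := exists_unitary_isDiag_of_isHermitian
    (S := {M | M ∈ StarAlgebra.adjoin ℂ S ∧ M.IsHermitian}) (fun M hM => hM.2)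
    (fun M hM N hN _ => setLike_mul_comm hM.1 hN.1)
  refine ⟨U, fun M hM => ?_⟩
  have hMS := StarAlgebra.subset_adjoin ℂ S hM
  have hre : (ℜ M : Matrix n n ℂ) ∈ StarAlgebra.adjoin ℂ S := by
    rw [realPart_apply_coe, ← Complex.coe_smul]
    exact SMulMemClass.smul_mem _ (add_mem hMS (star_mem hMS))
  have him : (ℑ M : Matrix n n ℂ) ∈ StarAlgebra.adjoin ℂ S := by
    rw [imaginaryPart_apply_coe, ← Complex.coe_smul]
    exact SMulMemClass.smul_mem _ (SMulMemClass.smul_mem _ (sub_mem hMS (star_mem hMS)))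
  rw [← realPart_add_I_smul_imaginaryPart M, mul_add, add_mul, mul_smul_comm, smul_mul_assoc]
  exact (hU _ ⟨hre, (ℜ M).2⟩).add ((hU _ ⟨him, (ℑ M).2⟩).smul _)

theorem exists_conj_isDiag {S : Set (unitaryGroup n ℂ)} (hcomm : S.Pairwise Commute) :
    ∃ P : unitaryGroup n ℂ, ∀ u ∈ S, (MulAut.conj P u : Matrix n n ℂ).IsDiag := by
  obtain ⟨U, hU⟩ := exists_unitary_isDiag_of_isStarNormal
    (S := (fun u : unitaryGroup n ℂ => (u : Matrix n n ℂ)) '' S)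
    (by rintro _ ⟨u, -, rfl⟩; infer_instance)
    (by
      rintro _ ⟨u, hu, rfl⟩ _ ⟨v, hv, rfl⟩ huv
      exact congrArg Subtype.val (hcomm hu hv (ne_of_apply_ne _ huv)))
  exact ⟨U⁻¹, fun u hu => by simpa using hU u ⟨u, hu, rfl⟩⟩

end SimultaneousDiagonalization

section NearIdentity

open Matrix
open scoped commutatorElement

theorem dist_conj_one {H : Type*} [Group H] [PseudoMetricSpace H] [IsIsometricSMul H H]
    [IsIsometricSMul Hᵐᵒᵖ H] (g h : H) : dist (g * h * g⁻¹) 1 = dist h 1 := by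
  rw [← dist_mul_right _ _ g, inv_mul_cancel_right, one_mul, ← dist_mul_left g h 1, mul_one]

section CStarRing

variable {E : Type*} [NormedRing E] [StarRing E] [CStarRing E]

instance : IsIsometricSMul (unitary E) (unitary E) where
  isometry_smul u := Isometry.of_dist_eq fun v w => by
    simp [Subtype.dist_eq, dist_eq_norm, ← mul_sub]

instance : IsIsometricSMul (unitary E)ᵐᵒᵖ (unitary E) where
  isometry_smul u := Isometry.of_dist_eq fun v w => by
    simp [Subtype.dist_eq, dist_eq_norm, ← sub_mul]

theorem dist_commutator_one_le (a b : unitary E) :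
    dist ⁅a, b⁆ 1 ≤ 2 * dist a 1 * dist b 1 := by
  calc dist ⁅a, b⁆ 1 = dist (a * b) (b * a) := by
        rw [← dist_mul_right _ _ (b * a), commutatorElement_def]
        group
    _ = ‖((a : E) - 1) * (b - 1) - (b - 1) * (a - 1)‖ := by
        rw [Subtype.dist_eq, dist_eq_norm]
        push_cast
        noncomm_ring
    _ ≤ ‖(a : E) - 1‖ * ‖(b : E) - 1‖ + ‖(b : E) - 1‖ * ‖(a : E) - 1‖ :=
        (norm_sub_le _ _).trans (add_le_add (norm_mul_le _ _) (norm_mul_le _ _))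
    _ = 2 * dist a 1 * dist b 1 := by
        simp only [Subtype.dist_eq, dist_eq_norm, OneMemClass.coe_one]
        ring

end CStarRing

open scoped Matrix.Norms.L2Operator

theorem norm_entry_le_l2_opNorm {m n 𝕜 : Type*} [Fintype m] [Fintype n] [DecidableEq n]
    [RCLike 𝕜] (M : Matrix m n 𝕜) (i : m) (j : n) : ‖M i j‖ ≤ ‖M‖ := by
  calc ‖M i j‖ = ‖WithLp.toLp 2 (M *ᵥ (EuclideanSpace.single j (1 : 𝕜)).ofLp) i‖ := by simp
    _ ≤ ‖WithLp.toLp 2 (M *ᵥ (EuclideanSpace.single j (1 : 𝕜)).ofLp)‖ := PiLp.norm_apply_le _ i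
    _ ≤ ‖M‖ * ‖EuclideanSpace.single j (1 : 𝕜)‖ := l2_opNorm_mulVec M _
    _ = ‖M‖ := by simp

theorem eq_of_semiconjBy_of_isDiag {R n : Type*} [Fintype n] [CommRing R] [NoZeroDivisors R]
    {A B C : Matrix n n R} (hA : A.IsDiag) (hC : C.IsDiag) (hB : ∀ i, B i i ≠ 0)
    (h : SemiconjBy B A C) : A = C := by
  classical
  ext i j
  rcases eq_or_ne i j with rfl | hij
  · have hii := congrFun (congrFun h.eq i) i
    rw [← hA.diagonal_diag, ← hC.diagonal_diag, mul_diagonal, diagonal_mul, mul_comm] at hii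
    exact mul_right_cancel₀ (hB i) hii
  · rw [hA hij, hC hij]

variable {n : Type*} [Fintype n] [DecidableEq n]

theorem entry_ne_zero_of_dist_one_lt {u : unitaryGroup n ℂ} (hu : dist u 1 < 1) (i : n) :
    (u : Matrix n n ℂ) i i ≠ 0 := by
  intro h
  have := norm_entry_le_l2_opNorm ((u : Matrix n n ℂ) - 1) i i
  rw [Subtype.dist_eq, dist_eq_norm] at hu
  rw [Matrix.sub_apply, h, one_apply_eq, zero_sub, norm_neg, norm_one] at this
  exact this.not_gt hu

theorem commute_of_commute_conj {a b : unitaryGroup n ℂ} (hb : dist b 1 < 1)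
    (hab : Commute a (b * a * b⁻¹)) : Commute a b := by
  obtain ⟨P, hP⟩ := exists_conj_isDiag (S := {a, b * a * b⁻¹})
    (Set.pairwise_pair.2 fun _ => ⟨hab, hab.symm⟩)
  have hPb : dist (MulAut.conj P b) 1 < 1 := (dist_conj_one P b).trans_lt hb
  have hconj : SemiconjBy (MulAut.conj P b) (MulAut.conj P a) (MulAut.conj P (b * a * b⁻¹)) :=
    SemiconjBy.map (by simp [SemiconjBy]) (MulAut.conj P)
  have ha : a = b * a * b⁻¹ := (MulAut.conj P).injective <| Subtype.ext <|
    eq_of_semiconjBy_of_isDiag (hP _ (by simp)) (hP _ (by simp))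
      (entry_ne_zero_of_dist_one_lt hPb) (congrArg Subtype.val hconj)
  exact eq_mul_inv_iff_mul_eq.1 ha

theorem commute_of_dist_one_lt {Γ : Subgroup (unitaryGroup n ℂ)} [Finite Γ]
    {a b : unitaryGroup n ℂ} (ha : a ∈ Γ) (hb : b ∈ Γ) (ha1 : dist a 1 < 1 / 2)
    (hb1 : dist b 1 < 1 / 2) : Commute a b := by
  -- Take `c` closest to `1` among the counterexamples `b`; then `⁅a, c⁆` is closer still.
  by_contra hab
  obtain ⟨c, ⟨hcΓ, hc1, hac⟩, hmin⟩ := Set.exists_min_image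
    {c | c ∈ Γ ∧ dist c 1 < 1 / 2 ∧ ¬Commute a c} (dist · 1)
    ((Γ : Set (unitaryGroup n ℂ)).toFinite.subset fun c hc => hc.1) ⟨b, hb, hb1, hab⟩
  have hc0 : 0 < dist c 1 := dist_pos.2 fun h => hac (h ▸ Commute.one_right a)
  have hcloser : dist ⁅a, c⁆ 1 < dist c 1 :=
    (dist_commutator_one_le a c).trans_lt (by nlinarith)
  have hcomm : Commute a ⁅a, c⁆ := by
    by_contra h
    exact hcloser.not_ge (hmin _ ⟨Γ.mul_mem (Γ.mul_mem (Γ.mul_mem ha hcΓ) (Γ.inv_mem ha))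
      (Γ.inv_mem hcΓ), hcloser.trans hc1, h⟩)
  refine hac (commute_of_commute_conj (hc1.trans (by norm_num)) ?_)
  have hconj : c * a * c⁻¹ = (a⁻¹ * ⁅a, c⁆)⁻¹ := by
    rw [commutatorElement_def]
    group
  rw [hconj]
  exact ((Commute.refl a).inv_right.mul_right hcomm).inv_right

end NearIdentity

section BohrNeighborhoods

open Matrix Metric
open scoped Matrix.Norms.L2Operator

theorem exists_card_le_mul_ncard_preimage_ball (H : Type*) [Group H] [PseudoMetricSpace H]
    [IsIsometricSMul H H] [CompactSpace H] {r : ℝ} (hr : 0 < r) :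
    ∃ N : ℕ, ∀ (G : Type*) [Group G] [Finite G] (τ : G →* H),
      Nat.card G ≤ N * (τ ⁻¹' ball 1 r).ncard := by
  obtain ⟨t, -, ht, hcover⟩ :=
    (isCompact_univ (X := H)).finite_cover_balls (half_pos hr)
  refine ⟨ht.toFinset.card, fun G _ _ τ => ?_⟩
  have hle : ∀ h : H, (τ ⁻¹' ball h (r / 2)).ncard ≤ (τ ⁻¹' ball 1 r).ncard := by
    intro h
    rcases (τ ⁻¹' ball h (r / 2)).eq_empty_or_nonempty with hempty | ⟨g₀, hg₀⟩
    · simp [hempty]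
    · refine Set.ncard_le_ncard_of_injOn (g₀⁻¹ * ·) (fun g hg => ?_)
        (mul_right_injective _).injOn
      rw [Set.mem_preimage, mem_ball] at hg hg₀ ⊢
      rw [map_mul, map_inv, ← dist_mul_left (τ g₀), mul_inv_cancel_left, mul_one]
      linarith [dist_triangle_right (τ g) (τ g₀) h]
  calc Nat.card G = (⋃ h ∈ ht.toFinset, τ ⁻¹' ball h (r / 2)).ncard := by
        rw [← Set.ncard_univ]
        congr 1
        ext g
        simpa using hcover (Set.mem_univ (τ g))
    _ ≤ ∑ h ∈ ht.toFinset, (τ ⁻¹' ball h (r / 2)).ncard := Finset.set_ncard_biUnion_le _ _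
    _ ≤ ht.toFinset.card * (τ ⁻¹' ball 1 r).ncard :=
        Finset.sum_le_card_nsmul _ _ _ fun h _ => hle h

theorem index_le_of_card_le_mul_ncard {G : Type*} [Group G] [Finite G] {L : Subgroup G}
    {S : Set G} {N : ℕ} (hSL : S ⊆ L) (hN : Nat.card G ≤ N * S.ncard) : L.index ≤ N := by
  have hSL' : S.ncard ≤ Nat.card L := Set.ncard_le_ncard hSL
  refine Nat.le_of_mul_le_mul_left ?_ (Nat.card_pos (α := L))
  calc Nat.card L * L.index = Nat.card G := L.card_mul_index
    _ ≤ N * S.ncard := hN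
    _ ≤ Nat.card L * N := by rw [mul_comm]; gcongr

instance {m : Type*} [Fintype m] [DecidableEq m] : CompactSpace (unitaryGroup m ℂ) := by
  have : ProperSpace (Matrix m m ℂ) := FiniteDimensional.proper ℂ _
  refine isCompact_iff_compactSpace.1
    (isCompact_of_isClosed_isBounded isClosed_unitary ?_)
  refine (isBounded_iff_forall_norm_le (s := (unitaryGroup m ℂ : Set (Matrix m m ℂ)))).2
    ⟨‖(1 : Matrix m m ℂ)‖, fun u hu => ?_⟩
  rw [← mul_one u, CStarRing.norm_mem_unitary_mul 1 hu]

/-- The group `T(n)` of diagonal unitary `n × n` matrices, in which the group `K` of a Bohr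
neighborhood lies. -/
def diagonalTorus (n : Type*) [Fintype n] [DecidableEq n] : Subgroup (unitaryGroup n ℂ) where
  carrier := {u | (u : Matrix n n ℂ).IsDiag}
  one_mem' := isDiag_one
  mul_mem' {u v} hu hv := by
    have huv : (u : Matrix n n ℂ) * v = diagonal (fun i => u.1.diag i * v.1.diag i) := by
      rw [← diagonal_mul_diagonal, IsDiag.diagonal_diag hu, IsDiag.diagonal_diag hv]
    exact (congrArg IsDiag huv).mpr (isDiag_diagonal _)
  inv_mem' hu := hu.conjTranspose

theorem uDist_eq_dist {m : ℕ} (u v : unitaryGroup (Fin m) ℂ) : uDist m u v = dist u v := by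
  rw [Subtype.dist_eq, dist_eq_norm]
  rfl

variable {G : Type*} [Group G] {m : ℕ}

theorem isBohrNbhd_of_le_comap_diagonalTorus {r : ℝ} (hr : 0 < r)
    (τ : G →* unitaryGroup (Fin m) ℂ) {L : Subgroup G} [L.Normal]
    (hL : L ≤ (diagonalTorus (Fin m)).comap τ) (hball : τ ⁻¹' ball 1 r ⊆ L) :
    IsBohrNbhd r m L.index (τ ⁻¹' ball 1 r) := by
  have hker : τ.ker ≤ L := fun g hg => hball (by simp [τ.mem_ker.1 hg, hr])
  have hmap : (L.map τ).subgroupOf τ.range = L.map τ.rangeRestrict := by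
    rw [Subgroup.subgroupOf, ← τ.subtype_comp_rangeRestrict, ← Subgroup.map_map]
    exact Subgroup.comap_map_eq_self_of_injective τ.range.subtype_injective _
  refine ⟨τ, L.map τ, Subgroup.map_le_range τ L, ?_, ?_, ?_, ?_⟩
  · rw [hmap]
    exact Subgroup.Normal.map inferInstance _ τ.rangeRestrict_surjective
  · rw [hmap, Subgroup.index_map, τ.ker_rangeRestrict, sup_eq_left.2 hker,
      MonoidHom.range_eq_top.2 τ.rangeRestrict_surjective, Subgroup.index_top, mul_one]
  · rintro _ ⟨g, hg, rfl⟩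
    exact hL hg
  · ext g
    rw [Set.mem_ofPred_eq, uDist_eq_dist]
    exact ⟨fun hg => ⟨⟨g, hball hg, rfl⟩, hg⟩, fun hg => hg.2⟩

theorem isBohrNbhd_preimage_ball [Finite G] {r : ℝ} (hr : 0 < r) (hr' : r ≤ 1 / 2)
    (τ : G →* unitaryGroup (Fin m) ℂ) :
    IsBohrNbhd r m (Subgroup.normalClosure (τ ⁻¹' ball 1 (1 / 2))).index (τ ⁻¹' ball 1 r) := by
  have : Finite τ.range := Finite.of_surjective _ τ.rangeRestrict_surjective
  obtain ⟨P, hP⟩ := exists_conj_isDiag (S := (τ.range : Set _) ∩ ball 1 (1 / 2))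
    fun u hu v hv _ => commute_of_dist_one_lt (Γ := τ.range) hu.1 hv.1 hu.2 hv.2
  have hpre : ∀ s, ((MulAut.conj P).toMonoidHom.comp τ) ⁻¹' ball 1 s = τ ⁻¹' ball 1 s := by
    intro s
    ext g
    simp [mem_ball, dist_conj_one]
  rw [← hpre r]
  refine isBohrNbhd_of_le_comap_diagonalTorus hr _ ((Subgroup.closure_le _).2 fun g hg => ?_) ?_
  · obtain ⟨a, ha, hag⟩ := Group.mem_conjugatesOfSet_iff.1 hg
    obtain ⟨c, rfl⟩ := isConj_iff.1 hag
    refine hP _ ⟨⟨_, rfl⟩, ?_⟩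
    rwa [map_mul, map_mul, map_inv, mem_ball, dist_conj_one]
  · rw [hpre r]
    exact (Set.preimage_mono (ball_subset_ball hr')).trans Subgroup.subset_normalClosure

theorem exists_isBohrNbhd_of_card_le (m : ℕ) {r : ℝ} (hr : 0 < r) (hr' : r ≤ 1 / 2) :
    ∃ N : ℕ, ∀ (G : Type*) [Group G] [Finite G] (τ : G →* unitaryGroup (Fin m) ℂ),
      Nat.card G ≤ N * (τ ⁻¹' ball 1 r).ncard ∧
        ∃ n, 1 ≤ n ∧ n ≤ N ∧ IsBohrNbhd r m n (τ ⁻¹' ball 1 r) := by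
  obtain ⟨N, hN⟩ := exists_card_le_mul_ncard_preimage_ball (unitaryGroup (Fin m) ℂ) hr
  refine ⟨N, fun G _ _ τ => ⟨hN G τ, _, ?_, ?_, isBohrNbhd_preimage_ball hr hr' τ⟩⟩
  · exact Nat.one_le_iff_ne_zero.2 Subgroup.index_ne_zero_of_finite
  · exact index_le_of_card_le_mul_ncard ((Set.preimage_mono (ball_subset_ball hr')).trans
      Subgroup.subset_normalClosure) (hN G τ)

end BohrNeighborhoods

section VCDimension

open Finset

theorem card_le_vcDim {α : Type*} {F : Set (Set α)} {S : Finset α} (hS : Shatters F S) :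
    (#S : ℕ∞) ≤ vcDim F :=
  le_iSup₂_of_le S hS le_rfl

theorem vcDim_image_preimage_le {α β : Type*} (f : β → α) (F : Set (Set α)) :
    vcDim ((f ⁻¹' ·) '' F) ≤ vcDim F := by
  classical
  refine iSup₂_le fun S hS => ?_
  have hinj : Set.InjOn f S := by
    intro a ha b hb hab
    obtain ⟨_, ⟨X, -, rfl⟩, hX⟩ := hS {a} (by simpa using ha)
    have haX : f a ∈ X := (hX.ge rfl).2
    exact (hX.le ⟨hb, by simpa only [Set.mem_preimage, ← hab] using haX⟩).symm
  rw [← card_image_of_injOn hinj]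
  refine card_le_vcDim fun T hT => ?_
  obtain ⟨_, ⟨X, hXF, rfl⟩, hX⟩ := hS (S ∩ f ⁻¹' T) Set.inter_subset_left
  refine ⟨X, hXF, ?_⟩
  rw [coe_image] at hT ⊢
  rw [← Set.image_inter_preimage, hX, Set.image_inter_preimage, Set.inter_eq_right.2 hT]

theorem ncard_le_sum_choose_of_vcDim_le {α : Type*} [Fintype α] {F : Set (Set α)} {d : ℕ}
    (hF : vcDim F ≤ d) : F.ncard ≤ ∑ j ∈ Iic d, (Fintype.card α).choose j := by
  classical
  let 𝒜 : Finset (Finset α) := {S | (S : Set α) ∈ F}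
  have hcard : F.ncard = #𝒜 := by
    rw [← Set.ncard_coe_finset, ← Set.ncard_preimage_of_injective_subset_range
      (f := ((↑) : Finset α → Set α)) coe_injective fun X _ => ⟨X.toFinset, X.coe_toFinset⟩]
    congr 1
    ext S
    simp [𝒜]
  have hvc : 𝒜.vcDim ≤ d := by
    refine Finset.sup_le fun S hS => ?_
    have hshatters : Shatters F S := by
      intro T hT
      lift T to Finset α using S.finite_toSet.subset hT
      obtain ⟨X, hX, hXT⟩ := mem_shatterer.1 hS (coe_subset.1 hT)
      exact ⟨X, by simpa [𝒜] using hX, mod_cast congrArg ((↑) : Finset α → Set α) hXT⟩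
    exact_mod_cast (card_le_vcDim hshatters).trans hF
  calc F.ncard = #𝒜 := hcard
    _ ≤ #𝒜.shatterer := 𝒜.card_le_card_shatterer
    _ ≤ ∑ j ∈ Iic 𝒜.vcDim, (Fintype.card α).choose j := card_shatterer_le_sum_vcDim
    _ ≤ ∑ j ∈ Iic d, (Fintype.card α).choose j :=
        sum_le_sum_of_subset (Iic_subset_Iic.2 hvc)

theorem exists_sample_forall_exists_mem {α ι : Type*} [Fintype α] [Nonempty α] (I : Finset ι)
    {D : ι → Finset α} {η : ℝ} (hD : ∀ i ∈ I, η * Fintype.card α ≤ #(D i)) {k : ℕ}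
    (hk : #I * Real.exp (-η) ^ k < 1) : ∃ x : Fin k → α, ∀ i ∈ I, ∃ t, x t ∈ D i := by
  classical
  by_contra! hx
  have hcompl : ∀ i ∈ I, (#(D i)ᶜ : ℝ) ≤ Real.exp (-η) * Fintype.card α := by
    intro i hi
    have h := Real.one_sub_le_exp_neg η
    rw [card_compl, Nat.cast_sub (card_le_univ _)]
    nlinarith [hD i hi, (Nat.cast_nonneg (Fintype.card α) : (0 : ℝ) ≤ _)]
  have hcover : (Fintype.card α : ℝ) ^ k ≤ #I * (Real.exp (-η) * Fintype.card α) ^ k := by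
    calc (Fintype.card α : ℝ) ^ k = #(univ : Finset (Fin k → α)) := by simp
      _ ≤ #(I.biUnion fun i => Fintype.piFinset fun _ : Fin k => (D i)ᶜ) := by
          gcongr
          intro x _
          simpa using hx x
      _ ≤ ∑ i ∈ I, (#(D i)ᶜ : ℝ) ^ k := by
          refine (Nat.cast_le.2 card_biUnion_le).trans_eq ?_
          simp
      _ ≤ #I * (Real.exp (-η) * Fintype.card α) ^ k := by
          rw [← nsmul_eq_mul]
          exact sum_le_card_nsmul _ _ _ fun i hi => pow_le_pow_left₀ (by positivity) (hcompl i hi) k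
  have hpos : (0 : ℝ) < (Fintype.card α : ℝ) ^ k := by
    have := Fintype.card_pos (α := α)
    positivity
  rw [mul_pow, ← mul_assoc] at hcover
  nlinarith

theorem card_le_sum_choose_of_separated {α : Type*} [Fintype α] [Nonempty α] {F : Set (Set α)}
    {d : ℕ} (hF : vcDim F ≤ d) {η : ℝ} {𝒮 : Finset (Set α)} (h𝒮 : ↑𝒮 ⊆ F)
    (hsep : (𝒮 : Set (Set α)).Pairwise fun X Y => η * Fintype.card α < (X ∆ Y).ncard) {k : ℕ}
    (hk : (#𝒮 : ℝ) ^ 2 * Real.exp (-η) ^ k < 1) : #𝒮 ≤ ∑ j ∈ Iic d, k.choose j := by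
  -- Some sample of `k` points separates all members of `𝒮`; Sauer-Shelah counts their traces on it.
  classical
  have hoffDiag : (#𝒮.offDiag : ℝ) ≤ (#𝒮 : ℝ) ^ 2 := by
    rw [sq]
    exact_mod_cast offDiag_card 𝒮 ▸ Nat.sub_le _ _
  obtain ⟨x, hx⟩ := exists_sample_forall_exists_mem 𝒮.offDiag (η := η)
    (D := fun p => (p.1 ∆ p.2).toFinset) (fun p hp => by
      rw [mem_offDiag] at hp
      rw [← Set.ncard_eq_toFinset_card']
      exact (hsep hp.1 hp.2.1 hp.2.2).le)
    ((mul_le_mul_of_nonneg_right hoffDiag (by positivity)).trans_lt hk)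
  have hinj : Set.InjOn (x ⁻¹' ·) (𝒮 : Set (Set α)) := by
    intro X hX Y hY hXY
    by_contra hne
    obtain ⟨t, ht⟩ := hx (X, Y) (mem_offDiag.2 ⟨hX, hY, hne⟩)
    rw [Set.mem_toFinset, Set.mem_symmDiff] at ht
    have htXY : x t ∈ X ↔ x t ∈ Y := Set.ext_iff.1 hXY t
    tauto
  calc #𝒮 = ((x ⁻¹' ·) '' (𝒮 : Set (Set α))).ncard := by
        rw [hinj.ncard_image, Set.ncard_coe_finset]
    _ ≤ ((x ⁻¹' ·) '' F).ncard := Set.ncard_le_ncard (Set.image_mono h𝒮)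
    _ ≤ ∑ j ∈ Iic d, k.choose j := by
        simpa using ncard_le_sum_choose_of_vcDim_le ((vcDim_image_preimage_le x F).trans hF)

theorem exists_sum_choose_sq_mul_exp_neg_pow_lt_one (d : ℕ) {η : ℝ} (hη : 0 < η) :
    ∃ k : ℕ, ((∑ j ∈ Iic d, k.choose j + 1 : ℕ) : ℝ) ^ 2 * Real.exp (-η) ^ k < 1 := by
  have hlim := (tendsto_pow_const_mul_const_pow_of_abs_lt_one (2 * d) (r := Real.exp (-η))
    (by rw [Real.abs_exp]; simpa using hη)).const_mul ((d + 2 : ℝ) ^ 2)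
  rw [mul_zero] at hlim
  obtain ⟨k, hk, hk1⟩ :=
    ((hlim.eventually_lt_const one_pos).and (Filter.eventually_ge_atTop 1)).exists
  refine ⟨k, lt_of_le_of_lt ?_ hk⟩
  have hsum : ∑ j ∈ Iic d, k.choose j + 1 ≤ (d + 2) * k ^ d := by
    calc ∑ j ∈ Iic d, k.choose j + 1 ≤ ∑ _j ∈ Iic d, k ^ d + k ^ d := by
          gcongr with j hj
          · exact (Nat.choose_le_pow k j).trans (Nat.pow_le_pow_right hk1 (mem_Iic.1 hj))
          · exact Nat.one_le_pow _ _ hk1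
      _ = (d + 2) * k ^ d := by simp; ring
  calc _ ≤ (((d + 2) * k ^ d : ℕ) : ℝ) ^ 2 * Real.exp (-η) ^ k := by gcongr
    _ = (d + 2 : ℝ) ^ 2 * ((k : ℝ) ^ (2 * d) * Real.exp (-η) ^ k) := by
        push_cast
        ring

theorem exists_card_le_of_separated (d : ℕ) {η : ℝ} (hη : 0 < η) :
    ∃ N : ℕ, ∀ (α : Type*) [Finite α] (F : Set (Set α)), vcDim F ≤ d →
      ∀ 𝒮 : Finset (Set α), ↑𝒮 ⊆ F →
        ((𝒮 : Set (Set α)).Pairwise fun X Y => η * Nat.card α < (X ∆ Y).ncard) → #𝒮 ≤ N := by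
  obtain ⟨k, hk⟩ := exists_sum_choose_sq_mul_exp_neg_pow_lt_one d hη
  refine ⟨∑ j ∈ Iic d, k.choose j + 1, fun α _ F hF 𝒮 h𝒮 hsep => ?_⟩
  have := Fintype.ofFinite α
  rcases isEmpty_or_nonempty α with _ | _
  · exact (card_le_one_of_subsingleton 𝒮).trans (Nat.le_add_left _ _)
  by_contra! hlt
  obtain ⟨𝒯, h𝒯, hcard⟩ := exists_subset_card_eq hlt.le
  have := card_le_sum_choose_of_separated hF (η := η) (k := k) ((coe_subset.2 h𝒯).trans h𝒮)
    (by simpa using hsep.mono (coe_subset.2 h𝒯)) (by rwa [hcard])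
  omega

theorem exists_finset_forall_symmDiff_ncard_le (d : ℕ) {η : ℝ} (hη : 0 < η) :
    ∃ N : ℕ, ∀ (α : Type*) [Finite α] (F : Set (Set α)), vcDim F ≤ d →
      ∃ 𝒮 : Finset (Set α), ↑𝒮 ⊆ F ∧ #𝒮 ≤ N ∧
        ∀ X ∈ F, ∃ Y ∈ 𝒮, ((X ∆ Y).ncard : ℝ) ≤ η * Nat.card α := by
  classical
  obtain ⟨N, hN⟩ := exists_card_le_of_separated d hη
  refine ⟨N, fun α _ F hF => ?_⟩
  obtain ⟨𝒮, -, ⟨h𝒮F, hsep⟩, hmax⟩ := (Set.toFinite {𝒮 : Finset (Set α) | ↑𝒮 ⊆ F ∧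
    (𝒮 : Set (Set α)).Pairwise fun X Y => η * Nat.card α < (X ∆ Y).ncard}).exists_le_maximal
      (a := ∅) (by simp)
  refine ⟨𝒮, h𝒮F, hN α F hF 𝒮 h𝒮F hsep, fun X hX => ?_⟩
  by_contra! hfar
  have hinsert : X ∈ 𝒮 := by
    refine hmax ⟨?_, ?_⟩ (subset_insert X 𝒮) (mem_insert_self X 𝒮)
    · simpa [Set.insert_subset_iff] using ⟨hX, h𝒮F⟩
    · rw [coe_insert]
      exact hsep.insert fun Y hY _ => ⟨hfar Y hY, symmDiff_comm X Y ▸ hfar Y hY⟩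
  refine (hfar X hinsert).not_ge ?_
  rw [symmDiff_self, Set.bot_eq_empty, Set.ncard_empty, Nat.cast_zero]
  positivity

end VCDimension

section Stabilizer

open Finset

variable {G : Type*} [Group G]

theorem mem_stR_mul_inv_iff {A : Set G} {ε : ℝ} {x y : G} :
    x * y⁻¹ ∈ stR A ε ↔ (((A * {x}) ∆ (A * {y})).ncard : ℝ) ≤ ε * A.ncard := by
  have hmul : ∀ (B : Set G) (z : G), B * {z} = MulOpposite.op z • B := fun B z =>
    Set.mul_singleton
  have htranslate : (A * {x}) ∆ (A * {y}) = MulOpposite.op y • ((A * {x * y⁻¹}) ∆ A) := by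
    simp only [hmul, Set.smul_set_symmDiff, smul_smul, ← MulOpposite.op_mul, inv_mul_cancel_right]
  rw [htranslate, Set.ncard_smul_set]
  rfl

theorem stR_mono (A : Set G) : Monotone (stR A) := fun _ _ h _ hx =>
  hx.trans (mul_le_mul_of_nonneg_right h (Nat.cast_nonneg _))

theorem exists_ncard_le_mul_ncard_stR (d : ℕ) {α η : ℝ} (hα : 0 < α) (hη : 0 < η) :
    ∃ N : ℕ, ∀ (G : Type*) [Group G] [Finite G] (A : Set G), vcDim (rightFam A A) ≤ d →
      α * Nat.card G ≤ A.ncard → A.ncard ≤ N * (stR A η).ncard := by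
  obtain ⟨N, hN⟩ := exists_finset_forall_symmDiff_ncard_le d (mul_pos hη hα)
  refine ⟨N, fun G _ _ A hvc hA => ?_⟩
  obtain ⟨𝒮, h𝒮, hcard, hnet⟩ := hN G _ hvc
  have htranslate : ∀ Y ∈ 𝒮, ∃ y, A * {y} = Y := fun Y hY => (h𝒮 hY).imp fun y hy => hy.2
  choose! y hy using htranslate
  have hcover : A ⊆ ⋃ Y ∈ 𝒮, MulOpposite.op (y Y) • stR A η := by
    intro x hx
    obtain ⟨Y, hY, hxY⟩ := hnet _ ⟨x, hx, rfl⟩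
    have hstab : x * (y Y)⁻¹ ∈ stR A η := by
      rw [mem_stR_mul_inv_iff, hy Y hY]
      exact hxY.trans (by rw [mul_assoc]; gcongr)
    exact Set.mem_biUnion hY ⟨_, hstab, inv_mul_cancel_right _ _⟩
  calc A.ncard ≤ (⋃ Y ∈ 𝒮, MulOpposite.op (y Y) • stR A η).ncard := Set.ncard_le_ncard hcover
    _ ≤ ∑ Y ∈ 𝒮, (MulOpposite.op (y Y) • stR A η).ncard := set_ncard_biUnion_le _ _
    _ = #𝒮 * (stR A η).ncard := by simp [Set.ncard_smul_set]
    _ ≤ N * (stR A η).ncard := by gcongr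

end Stabilizer

section SpectralTruncation

open InnerProductSpace

variable {𝕜 E : Type*} [RCLike 𝕜] [NormedAddCommGroup E] [InnerProductSpace 𝕜 E]

theorem inner_map_eq_zero_of_commute {S T : E →ₗ[𝕜] E} (hT : T.IsSymmetric) (hS : Commute S T)
    {μ ν : 𝕜} {v w : E} (hv : T v = μ • v) (hw : T w = ν • w) (hμν : μ ≠ ν) :
    ⟪v, S w⟫_𝕜 = 0 := by
  have hSw : T (S w) = ν • S w := by
    rw [← map_smul, ← hw]
    exact LinearMap.congr_fun hS.eq.symm w
  exact hT.orthogonalFamily_eigenspaces hμν ⟨v, Module.End.mem_eigenspace_iff.2 hv⟩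
    ⟨S w, Module.End.mem_eigenspace_iff.2 hSw⟩

variable [FiniteDimensional 𝕜 E]

theorem re_inner_map_self_eq_sum_eigenvalues {T : E →ₗ[𝕜] E} (hT : T.IsSymmetric) {n : ℕ}
    (hn : Module.finrank 𝕜 E = n) (v : E) :
    RCLike.re ⟪T v, v⟫_𝕜 =
      ∑ i, hT.eigenvalues hn i * ‖⟪hT.eigenvectorBasis hn i, v⟫_𝕜‖ ^ 2 := by
  rw [← (hT.eigenvectorBasis hn).sum_inner_mul_inner, map_sum]
  refine Finset.sum_congr rfl fun i _ => ?_
  rw [hT, hT.apply_eigenvectorBasis, inner_smul_right, mul_assoc, RCLike.re_ofReal_mul,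
    inner_mul_symm_re_eq_norm, norm_mul, norm_inner_symm v, sq]

theorem exists_submodule_re_inner_map_self_le {T : E →ₗ[𝕜] E} (hT : T.IsPositive) (r : ℝ) :
    ∃ W : Submodule 𝕜 E, r * Module.finrank 𝕜 W ≤ RCLike.re (T.trace 𝕜 E) ∧
      (∀ v ∈ Wᗮ, RCLike.re ⟪T v, v⟫_𝕜 ≤ r * ‖v‖ ^ 2) ∧
      ∀ S : E →ₗ[𝕜] E, Commute S T → ∀ w ∈ W, S w ∈ W := by
  classical
  let μ := hT.isSymmetric.eigenvalues rfl
  let e := hT.isSymmetric.eigenvectorBasis rfl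
  have he : ∀ i, T (e i) = (μ i : 𝕜) • e i := hT.isSymmetric.apply_eigenvectorBasis rfl
  let I : Finset (Fin (Module.finrank 𝕜 E)) := {i | r ≤ μ i}
  refine ⟨Submodule.span 𝕜 (Set.range fun i : I => e i), ?_, fun v hv => ?_, fun S hS => ?_⟩
  · have hli : LinearIndependent 𝕜 fun i : I => e i :=
      (e.orthonormal.comp _ Subtype.val_injective).linearIndependent
    rw [finrank_span_eq_card hli]
    calc r * Fintype.card I = ∑ _i ∈ I, r := by simp [mul_comm]
      _ ≤ ∑ i ∈ I, μ i := Finset.sum_le_sum fun i hi => (Finset.mem_filter.1 hi).2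
      _ ≤ ∑ i, μ i := Finset.sum_le_sum_of_subset_of_nonneg (Finset.subset_univ _)
          fun i _ _ => hT.nonneg_eigenvalues rfl i
      _ = RCLike.re (T.trace 𝕜 E) := (hT.isSymmetric.re_trace_eq_sum_eigenvalues rfl).symm
  · rw [re_inner_map_self_eq_sum_eigenvalues hT.isSymmetric rfl, ← e.sum_sq_norm_inner_right v,
      Finset.mul_sum]
    refine Finset.sum_le_sum fun i _ => ?_
    by_cases hi : i ∈ I
    · have : ⟪e i, v⟫_𝕜 = 0 := hv _ (Submodule.subset_span ⟨⟨i, hi⟩, rfl⟩)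
      simp [e, this]
    · have : μ i < r := by simpa [I] using hi
      gcongr
  · change _ ≤ (Submodule.span 𝕜 _).comap S
    rw [Submodule.span_le]
    rintro _ ⟨⟨i, hi⟩, rfl⟩
    rw [SetLike.mem_coe, Submodule.mem_comap, ← e.sum_repr' (S (e i))]
    refine Submodule.sum_mem _ fun j _ => ?_
    by_cases hj : j ∈ I
    · exact Submodule.smul_mem _ _ (Submodule.subset_span ⟨⟨j, hj⟩, rfl⟩)
    · have hμ : (μ j : 𝕜) ≠ μ i := by
        rintro h
        rw [RCLike.ofReal_inj] at h
        exact hj (by simpa [I, h] using hi)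
      rw [inner_map_eq_zero_of_commute hT.isSymmetric hS (he j) (he i) hμ, zero_smul]
      exact zero_mem _

end SpectralTruncation

section UnitaryRepresentation

open InnerProductSpace

section RCLike

variable {𝕜 E G : Type*} [RCLike 𝕜] [NormedAddCommGroup E] [InnerProductSpace 𝕜 E] [Group G]

theorem sub_norm_sub_mul_norm_le_norm_inner {f u v : E} (hv : ⟪f, v⟫_𝕜 = ⟪v, v⟫_𝕜) :
    (‖v‖ - ‖u - f‖) * ‖v‖ ≤ ‖⟪u, v⟫_𝕜‖ := by
  have hfv : ‖⟪f, v⟫_𝕜‖ = ‖v‖ * ‖v‖ := by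
    rw [hv, inner_self_eq_norm_sq_to_K, norm_pow, RCLike.norm_ofReal, abs_norm, sq]
  calc (‖v‖ - ‖u - f‖) * ‖v‖ = ‖⟪f, v⟫_𝕜‖ - ‖u - f‖ * ‖v‖ := by rw [sub_mul, hfv]
    _ ≤ ‖⟪f, v⟫_𝕜‖ - ‖⟪u - f, v⟫_𝕜‖ := by
        gcongr
        exact norm_inner_le_norm _ _
    _ ≤ ‖⟪u, v⟫_𝕜‖ := by
        rw [inner_sub_left, sub_le_iff_le_add]
        exact norm_le_norm_add_norm_sub _ _

/-- The subrepresentation of a unitary representation on an invariant subspace. It turns a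
representation on `ℓ²(G)` into one of bounded dimension. -/
def restrictInvariant (ρ : G →* (E ≃ₗᵢ[𝕜] E)) (W : Submodule 𝕜 E)
    (hW : ∀ x, ∀ w ∈ W, ρ x w ∈ W) : G →* (W ≃ₗᵢ[𝕜] W) where
  toFun x :=
    { toLinearEquiv := LinearEquiv.ofLinearMap
        ((ρ x).toLinearEquiv.toLinearMap.restrict (hW x))
        ((ρ x⁻¹).toLinearEquiv.toLinearMap.restrict (hW x⁻¹))
        (by ext w; simp)
        (by ext w; simp)
      norm_map' := fun w => (ρ x).norm_map w }
  map_one' := by ext w; simp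
  map_mul' x y := by ext w; simp

section Fintype

variable [Fintype G]

/-- The frame operator `∑ₓ ⟪ρ x f, ·⟫ • ρ x f` of the orbit of `f` under a unitary
representation `ρ`. It commutes with `ρ`, so that its spectral subspaces are invariant. -/
noncomputable def orbitFrameOperator (ρ : G →* (E ≃ₗᵢ[𝕜] E)) (f : E) : E →L[𝕜] E :=
  ∑ x, rankOne 𝕜 (ρ x f) (ρ x f)

variable (ρ : G →* (E ≃ₗᵢ[𝕜] E)) (f : E)

theorem isPositive_orbitFrameOperator : (orbitFrameOperator ρ f).IsPositive :=
  ContinuousLinearMap.isPositive_sum _ fun x _ => isPositive_rankOne_self (ρ x f)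

theorem re_trace_orbitFrameOperator [FiniteDimensional 𝕜 E] :
    RCLike.re ((orbitFrameOperator ρ f).trace 𝕜 E) = Nat.card G * ‖f‖ ^ 2 := by
  simp [orbitFrameOperator, trace_rankOne]

theorem re_inner_orbitFrameOperator_self (v : E) :
    RCLike.re ⟪orbitFrameOperator ρ f v, v⟫_𝕜 = ∑ x, ‖⟪ρ x f, v⟫_𝕜‖ ^ 2 := by
  simp only [orbitFrameOperator, sum_apply, rankOne_apply, sum_inner, map_sum,
    inner_smul_left, inner_conj_symm, inner_mul_symm_re_eq_norm, norm_mul, sq]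
  exact Finset.sum_congr rfl fun x _ => by rw [norm_inner_symm v]

theorem orbitFrameOperator_apply_map (x : G) (v : E) :
    orbitFrameOperator ρ f (ρ x v) = ρ x (orbitFrameOperator ρ f v) := by
  have hmul : ∀ y w, ρ x (ρ y w) = ρ (x * y) w := fun y w => by rw [map_mul]; rfl
  simp only [orbitFrameOperator, sum_apply, rankOne_apply, map_sum, map_smul,
    hmul]
  rw [← Equiv.sum_comp (Equiv.mulLeft x)]
  simp

theorem norm_le_of_re_inner_orbitFrameOperator_le {f v : E} {c η : ℝ} (hc : 0 < c)
    (hη : 0 < η) (hS : c * Nat.card G ≤ {x | ‖ρ x f - f‖ ≤ η * ‖f‖}.ncard)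
    (hv : ⟪f, v⟫_𝕜 = ⟪v, v⟫_𝕜)
    (hle : RCLike.re ⟪orbitFrameOperator ρ f v, v⟫_𝕜 ≤
      c * η ^ 2 * (Nat.card G * ‖f‖ ^ 2) * ‖v‖ ^ 2) :
    ‖v‖ ≤ 2 * η * ‖f‖ := by
  classical
  by_contra! hlt
  set S : Set G := {x | ‖ρ x f - f‖ ≤ η * ‖f‖}
  have hvpos : 0 < ‖v‖ := lt_of_le_of_lt (by positivity) hlt
  have hGpos : (0 : ℝ) < Nat.card G := mod_cast Nat.card_pos
  have hinner : ∀ x ∈ S, (‖v‖ - η * ‖f‖) * ‖v‖ ≤ ‖⟪ρ x f, v⟫_𝕜‖ := fun x hx =>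
    (mul_le_mul_of_nonneg_right (sub_le_sub_left hx _) hvpos.le).trans
      (sub_norm_sub_mul_norm_le_norm_inner hv)
  have hsum : c * Nat.card G * ((‖v‖ - η * ‖f‖) * ‖v‖) ^ 2 ≤
      RCLike.re ⟪orbitFrameOperator ρ f v, v⟫_𝕜 := by
    calc c * Nat.card G * ((‖v‖ - η * ‖f‖) * ‖v‖) ^ 2
        ≤ S.ncard * ((‖v‖ - η * ‖f‖) * ‖v‖) ^ 2 := by gcongr
      _ = ∑ x ∈ S.toFinset, ((‖v‖ - η * ‖f‖) * ‖v‖) ^ 2 := by simp [Set.ncard_eq_toFinset_card']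
      _ ≤ ∑ x ∈ S.toFinset, ‖⟪ρ x f, v⟫_𝕜‖ ^ 2 := by
          refine Finset.sum_le_sum fun x hx => pow_le_pow_left₀ ?_ (hinner x (by simpa using hx)) 2
          exact mul_nonneg (by nlinarith) hvpos.le
      _ ≤ ∑ x, ‖⟪ρ x f, v⟫_𝕜‖ ^ 2 :=
          Finset.sum_le_sum_of_subset_of_nonneg (Finset.subset_univ _) fun _ _ _ => by positivity
      _ = _ := (re_inner_orbitFrameOperator_self ρ f v).symm
  have hsq : (η * ‖f‖) ^ 2 < (‖v‖ - η * ‖f‖) ^ 2 :=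
    pow_lt_pow_left₀ (by linarith) (by positivity) two_ne_zero
  have hgap := mul_lt_mul_of_pos_left hsq (show 0 < c * Nat.card G * ‖v‖ ^ 2 by positivity)
  linarith [hsum.trans hle]

end Fintype

theorem exists_invariant_submodule_norm_sub_starProjection_le [Finite G] [FiniteDimensional 𝕜 E]
    (ρ : G →* (E ≃ₗᵢ[𝕜] E)) {f : E} {c η : ℝ} (hc : 0 < c) (hη : 0 < η) (hf : f ≠ 0)
    (hS : c * Nat.card G ≤ {x | ‖ρ x f - f‖ ≤ η * ‖f‖}.ncard) :
    ∃ W : Submodule 𝕜 E, (∀ x, ∀ w ∈ W, ρ x w ∈ W) ∧ Module.finrank 𝕜 W ≤ 1 / (c * η ^ 2) ∧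
      ‖f - W.starProjection f‖ ≤ 2 * η * ‖f‖ := by
  have := Fintype.ofFinite G
  obtain ⟨W, hrank, hquad, hinv⟩ := exists_submodule_re_inner_map_self_le
    (isPositive_orbitFrameOperator ρ f) (c * η ^ 2 * (Nat.card G * ‖f‖ ^ 2))
  refine ⟨W, fun x => hinv (ρ x).toLinearEquiv ?_, ?_, ?_⟩
  · exact LinearMap.ext fun v => (orbitFrameOperator_apply_map ρ f x v).symm
  · have hpos : (0 : ℝ) < Nat.card G * ‖f‖ ^ 2 := by
      have := norm_pos_iff.2 hf
      have : (0 : ℝ) < Nat.card G := mod_cast Nat.card_pos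
      positivity
    rw [re_trace_orbitFrameOperator] at hrank
    rw [le_div_iff₀ (by positivity)]
    nlinarith
  · refine norm_le_of_re_inner_orbitFrameOperator_le ρ hc hη hS ?_
      (hquad _ (W.sub_starProjection_mem_orthogonal f))
    rw [← sub_eq_zero, ← inner_sub_left, sub_sub_cancel]
    exact W.sub_starProjection_mem_orthogonal f _ (W.starProjection_apply_mem f)

end RCLike

open scoped Matrix.Norms.L2Operator

theorem exists_mulEquiv_unitaryGroup (F : Type*) [NormedAddCommGroup F] [InnerProductSpace ℂ F]
    [FiniteDimensional ℂ F] :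
    ∃ Φ : (F ≃ₗᵢ[ℂ] F) ≃* Matrix.unitaryGroup (Fin (Module.finrank ℂ F)) ℂ,
      ∀ u v, ‖u v - v‖ ≤ dist (Φ u) 1 * ‖v‖ := by
  have : CompleteSpace F := FiniteDimensional.complete ℂ F
  let φ : (F →L[ℂ] F) ≃⋆ₐ[ℂ] Matrix (Fin (Module.finrank ℂ F)) (Fin (Module.finrank ℂ F)) ℂ :=
    (stdOrthonormalBasis ℂ F).repr.conjStarAlgEquiv.trans Matrix.toEuclideanCLM.symm
  let ψ := Unitary.mapEquiv { φ.toMulEquiv with map_star' := map_star φ }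
  refine ⟨Unitary.linearIsometryEquiv.symm.trans ψ.toMulEquiv, fun u v => ?_⟩
  have hdist : dist (ψ (Unitary.linearIsometryEquiv.symm u)) 1 =
      ‖(u : F →L[ℂ] F) - 1‖ := by
    rw [← StarAlgEquiv.norm_map φ, map_sub, map_one, Subtype.dist_eq, dist_eq_norm]
    rfl
  rw [MulEquiv.trans_apply, StarMulEquiv.coe_toMulEquiv, hdist]
  exact ((u : F →L[ℂ] F) - 1).le_opNorm v

theorem exists_hom_unitaryGroup_norm_sub_le {E G : Type*} [NormedAddCommGroup E]
    [InnerProductSpace ℂ E] [FiniteDimensional ℂ E] [Group G] [Finite G]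
    (ρ : G →* (E ≃ₗᵢ[ℂ] E)) {f : E} {c η : ℝ} (hc : 0 < c) (hη : 0 < η) (hη' : η < 1 / 2)
    (hf : f ≠ 0) (hS : c * Nat.card G ≤ {x | ‖ρ x f - f‖ ≤ η * ‖f‖}.ncard) :
    ∃ m : ℕ, 1 ≤ m ∧ m ≤ 1 / (c * η ^ 2) ∧ ∃ τ : G →* Matrix.unitaryGroup (Fin m) ℂ,
      ∀ x, ‖ρ x f - f‖ ≤ (4 * η + dist (τ x) 1) * ‖f‖ := by
  obtain ⟨W, hW, hrank, hclose⟩ :=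
    exists_invariant_submodule_norm_sub_starProjection_le ρ hc hη hf hS
  obtain ⟨Φ, hΦ⟩ := exists_mulEquiv_unitaryGroup W
  have hpos : 0 < ‖f‖ := norm_pos_iff.2 hf
  refine ⟨_, ?_, hrank, Φ.toMonoidHom.comp (restrictInvariant ρ W hW), fun x => ?_⟩
  · rw [Submodule.one_le_finrank_iff]
    rintro rfl
    rw [Submodule.starProjection_bot, zero_apply, sub_zero] at hclose
    nlinarith
  · set w : W := W.orthogonalProjectionOnto f
    have hw : ‖ρ x w - w‖ ≤ dist (Φ (restrictInvariant ρ W hW x)) 1 * ‖f‖ :=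
      (hΦ (restrictInvariant ρ W hW x) w).trans
        (by gcongr; exact W.norm_orthogonalProjectionOnto_apply_le f)
    calc ‖ρ x f - f‖ = ‖(ρ x w - w) + (ρ x (f - w) - (f - w))‖ := by
          rw [map_sub]
          abel_nf
      _ ≤ ‖ρ x w - w‖ + (‖f - w‖ + ‖f - w‖) := by
          refine (norm_add_le _ _).trans (add_le_add_right ((norm_sub_le _ _).trans_eq ?_) _)
          rw [LinearIsometryEquiv.norm_map]
      _ ≤ dist (Φ (restrictInvariant ρ W hW x)) 1 * ‖f‖ + (2 * η * ‖f‖ + 2 * η * ‖f‖) := by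
          gcongr <;> exact hclose
      _ = _ := by
          rw [MonoidHom.comp_apply, MulEquiv.coe_toMonoidHom]
          ring

end UnitaryRepresentation

section RegularRepresentation

/-- The indicator of `A` as a vector of `ℓ²(α)`, which makes `|A ∆ B|` a squared distance. -/
noncomputable def indicatorVector {α : Type*} (A : Set α) : EuclideanSpace ℂ α :=
  WithLp.toLp 2 (A.indicator 1)

theorem norm_indicatorVector_sub_sq {α : Type*} [Fintype α] (A B : Set α) :
    ‖indicatorVector A - indicatorVector B‖ ^ 2 = (A ∆ B).ncard := by
  classical
  calc ‖indicatorVector A - indicatorVector B‖ ^ 2 = ∑ a, if a ∈ A ∆ B then 1 else 0 := by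
        rw [EuclideanSpace.norm_sq_eq]
        refine Finset.sum_congr rfl fun a _ => ?_
        by_cases hA : a ∈ A <;> by_cases hB : a ∈ B <;>
          simp [indicatorVector, Set.mem_symmDiff, hA, hB]
    _ = (A ∆ B).ncard := by
        rw [Finset.sum_boole, Set.ncard_eq_toFinset_card', Set.filter_mem_univ_eq_toFinset]

theorem norm_indicatorVector_sq {α : Type*} [Fintype α] (A : Set α) :
    ‖indicatorVector A‖ ^ 2 = A.ncard := by
  have hempty : indicatorVector (∅ : Set α) = 0 := by ext; simp [indicatorVector]
  simpa [hempty, Set.symmDiff_def] using norm_indicatorVector_sub_sq A ∅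

variable {G : Type*} [Group G]

section Fintype

variable [Fintype G]

/-- The right regular representation `(x v) g = v (g * x)` of `G` on `ℓ²(G)`. It maps the indicator
of `A` to that of `A * {x⁻¹}`. -/
noncomputable def rightRegular (G : Type*) [Group G] [Fintype G] :
    G →* (EuclideanSpace ℂ G ≃ₗᵢ[ℂ] EuclideanSpace ℂ G) where
  toFun x := LinearIsometryEquiv.piLpCongrLeft 2 ℂ ℂ (Equiv.mulRight x⁻¹)
  map_one' := by
    ext v g
    change v (g * 1⁻¹⁻¹) = v g
    simp
  map_mul' x y := by
    ext v g
    change v (g * (x * y)⁻¹⁻¹) = v (g * x⁻¹⁻¹ * y⁻¹⁻¹)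
    simp [mul_assoc]

theorem rightRegular_indicatorVector (x : G) (A : Set G) :
    rightRegular G x (indicatorVector A) = indicatorVector (A * {x⁻¹}) := by
  ext g
  change A.indicator 1 (g * x⁻¹⁻¹) = (A * {x⁻¹}).indicator 1 g
  rw [Set.mul_singleton, Set.image_mul_right]
  rfl

theorem norm_rightRegular_indicatorVector_sub_sq (x : G) (A : Set G) :
    ‖rightRegular G x (indicatorVector A) - indicatorVector A‖ ^ 2 = ((A * {x}) ∆ A).ncard := by
  have htranslate : MulOpposite.op x • ((A * {x⁻¹}) ∆ A) = (A * {x}) ∆ A := by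
    rw [Set.smul_set_symmDiff, Set.mul_singleton, Set.mul_singleton, ← Set.image_smul,
      ← Set.image_smul, Set.image_image, symmDiff_comm]
    simp
  rw [rightRegular_indicatorVector, norm_indicatorVector_sub_sq, ← htranslate,
    Set.ncard_smul_set]

end Fintype

open scoped Matrix.Norms.L2Operator

theorem exists_hom_unitaryGroup_ncard_symmDiff_le [Finite G] {A : Set G} {c η : ℝ} (hA : A.Nonempty)
    (hc : 0 < c) (hη : 0 < η) (hη' : η < 1 / 2)
    (hS : c * Nat.card G ≤ (stR A (η ^ 2)).ncard) :
    ∃ m : ℕ, 1 ≤ m ∧ m ≤ 1 / (c * η ^ 2) ∧ ∃ τ : G →* Matrix.unitaryGroup (Fin m) ℂ,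
      ∀ x, ((A * {x}) ∆ A).ncard ≤ (4 * η + dist (τ x) 1) ^ 2 * A.ncard := by
  have := Fintype.ofFinite G
  have hA₀ : indicatorVector A ≠ 0 := by
    rw [← norm_ne_zero_iff, ← pow_ne_zero_iff two_ne_zero, norm_indicatorVector_sq]
    exact mod_cast hA.ncard_pos.ne'
  have hstab : stR A (η ^ 2) =
      {x | ‖rightRegular G x (indicatorVector A) - indicatorVector A‖ ≤
        η * ‖indicatorVector A‖} := by
    ext x
    rw [Set.mem_ofPred_eq, ← pow_le_pow_iff_left₀ (norm_nonneg _) (by positivity) two_ne_zero,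
      mul_pow, norm_rightRegular_indicatorVector_sub_sq, norm_indicatorVector_sq]
    rfl
  rw [hstab] at hS
  obtain ⟨m, hm, hmc, τ, hτ⟩ :=
    exists_hom_unitaryGroup_norm_sub_le (rightRegular G) hc hη hη' hA₀ hS
  refine ⟨m, hm, hmc, τ, fun x => ?_⟩
  rw [← norm_rightRegular_indicatorVector_sub_sq, ← norm_indicatorVector_sq, ← mul_pow]
  exact pow_le_pow_left₀ (norm_nonneg _) (hτ x) 2

end RegularRepresentation

section AlmostInvariantSets

open Finset

theorem exists_subset_mul_card_le_card_biUnion {ι α : Type*} [DecidableEq α]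
    (X : ι → Finset α) (I : Finset ι) {c : ℝ} (hc : 0 ≤ c) :
    ∃ F ⊆ I, c * #F ≤ #(F.biUnion X) ∧ ∀ i ∈ I, #(X i \ F.biUnion X) ≤ c := by
  classical
  obtain ⟨F, ⟨hFI, hF⟩, hmax⟩ := (I.powerset.finite_toSet.subset
    fun F hF => mem_coe.2 (mem_powerset.2 hF.1) :
      {F : Finset ι | F ⊆ I ∧ c * #F ≤ #(F.biUnion X)}.Finite).exists_maximal ⟨∅, by simp⟩
  refine ⟨F, hFI, hF, fun i hi => ?_⟩
  by_contra! hlt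
  have hiF : i ∉ F := fun hiF => by
    rw [sdiff_eq_empty_iff_subset.2 (subset_biUnion_of_mem X hiF), card_empty] at hlt
    exact hc.not_gt (mod_cast hlt)
  refine hiF (hmax ⟨insert_subset hi hFI, ?_⟩ (subset_insert i F) (mem_insert_self i F))
  rw [card_insert_of_notMem hiF, biUnion_insert, ← sdiff_union_self_eq_union,
    card_union_of_disjoint sdiff_disjoint]
  push_cast
  linarith

theorem ncard_smul_inter {G : Type*} [Group G] (g : G) (B S : Set G) :
    (g • B ∩ S).ncard = {b ∈ B | g * b ∈ S}.ncard := by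
  have himage : g • B ∩ S = g • {b ∈ B | g * b ∈ S} := by
    ext x
    simp [Set.mem_smul_set_iff_inv_smul_mem]
  rw [himage, Set.ncard_smul_set]

variable {G : Type*} [Group G] [DecidableEq G] {A B : Finset G} {r : ℝ}

theorem mem_mul_singleton_iff_mul_inv_mem {b g : G} : g ∈ A * {b} ↔ g * b⁻¹ ∈ A := by
  rw [mul_singleton, ← inv_smul_mem_iff]
  rfl

theorem card_filter_not_mem_iff_mul_mem_le (A S : Finset G) (b : G) :
    #{g ∈ S | ¬(g ∈ A ↔ g * b ∈ A)} ≤ #((A * {b}) ∆ A) := by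
  refine card_le_card_of_injOn (· * b) (fun g hg => ?_) (mul_left_injective b).injOn
  have hg' : ¬(g ∈ A ↔ g * b ∈ A) := (mem_filter.1 hg).2
  rw [mem_coe, mem_symmDiff, mem_mul_singleton_iff_mul_inv_mem, mul_inv_cancel_right]
  tauto

theorem mul_card_le_of_mul_card_le_card_filter {S : Finset G} {t : ℝ} (hB : B.Nonempty)
    (hstab : ∀ b ∈ B, #((A * {b}) ∆ A) ≤ r)
    (hS : ∀ g ∈ S, t * #B ≤ #{b ∈ B | ¬(g ∈ A ↔ g * b ∈ A)}) : t * #S ≤ r := by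
  have hcount : #S • (t * #B) ≤ #B • r :=
    card_nsmul_le_card_nsmul (fun g b => ¬(g ∈ A ↔ g * b ∈ A)) hS fun b hb =>
      (Nat.cast_le.2 (card_filter_not_mem_iff_mul_mem_le A S b)).trans (hstab b hb)
  have hBpos : (0 : ℝ) < #B := mod_cast hB.card_pos
  rw [nsmul_eq_mul, nsmul_eq_mul] at hcount
  refine le_of_mul_le_mul_left ?_ hBpos
  linarith

theorem card_le_card_filter_mul_mem_add {A' U : Finset G} (hU : U ⊆ A) (b : G) :
    #U ≤ #{f ∈ A' | f * b ∈ U} + (#((A * {b}) ∆ A) + #(A \ A')) := by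
  have hcover : U ⊆ {f ∈ A' | f * b ∈ U}.image (· * b) ∪
      ((A * {b}) ∆ A ∪ (A \ A').image (· * b)) := by
    intro u hu
    have hfilter : u * b⁻¹ * b ∈ U := by rwa [inv_mul_cancel_right]
    have := hU hu
    simp only [mem_union, mem_image, mem_filter, mem_sdiff, mem_symmDiff,
      mem_mul_singleton_iff_mul_inv_mem, ← eq_mul_inv_iff_mul_eq, exists_eq_right]
    tauto
  refine (card_le_card hcover).trans ((card_union_le _ _).trans ?_)
  grw [card_union_le, card_image_le, card_image_le]

theorem card_le_of_forall_card_filter_mul_mem_le {A' U : Finset G} {γ : ℝ} (hB : B.Nonempty)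
    (hU : U ⊆ A) (hstab : ∀ b ∈ B, #((A * {b}) ∆ A) ≤ r)
    (hγ : ∀ f ∈ A', #{b ∈ B | f * b ∈ U} ≤ γ * #B) : #U ≤ γ * #A' + (r + #(A \ A')) := by
  have hlower : ∀ b ∈ B, (#U - (r + #(A \ A')) : ℝ) ≤ #{f ∈ A' | f * b ∈ U} := fun b hb => by
    have hle : (#U : ℝ) ≤ #{f ∈ A' | f * b ∈ U} + (#((A * {b}) ∆ A) + #(A \ A')) :=
      mod_cast card_le_card_filter_mul_mem_add hU b
    linarith [hstab b hb]
  have hcount : #B • (#U - (r + #(A \ A')) : ℝ) ≤ #A' • (γ * #B) :=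
    card_nsmul_le_card_nsmul' (fun f b => f * b ∈ U) hlower hγ
  have hBpos : (0 : ℝ) < #B := mod_cast hB.card_pos
  rw [nsmul_eq_mul, nsmul_eq_mul] at hcount
  refine le_of_mul_le_mul_left ?_ hBpos
  linarith

theorem card_mul_sdiff_le {F : Finset G} {s : ℝ} (hF : ∀ f ∈ F, #{b ∈ B | f * b ∉ A} ≤ s) :
    #((F * B) \ A) ≤ s * #F := by
  have hsub : (F * B) \ A ⊆ F.biUnion fun f => {b ∈ B | f * b ∉ A}.image (f * ·) := by
    intro g hg
    obtain ⟨hg, hgA⟩ := mem_sdiff.1 hg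
    obtain ⟨f, hf, b, hb, rfl⟩ := mem_mul.1 hg
    exact mem_biUnion.2 ⟨f, hf, mem_image_of_mem _ (mem_filter.2 ⟨hb, hgA⟩)⟩
  calc (#((F * B) \ A) : ℝ) ≤ ∑ f ∈ F, (#{b ∈ B | f * b ∉ A} : ℝ) := mod_cast
        (card_le_card hsub).trans (card_biUnion_le.trans (sum_le_sum fun f _ => card_image_le))
    _ ≤ s * #F := by
        rw [mul_comm, ← nsmul_eq_mul]
        exact sum_le_card_nsmul _ _ _ hF

theorem exists_subset_forall_card_filter_mul_mem_sdiff_le (A B A' : Finset G) {c : ℝ}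
    (hc : 0 ≤ c) :
    ∃ F ⊆ A', c * #F ≤ #A ∧ ∀ f ∈ A', #{b ∈ B | f * b ∈ A \ (F * B)} ≤ c := by
  obtain ⟨F, hFA', hcard, hF⟩ :=
    exists_subset_mul_card_le_card_biUnion (fun f => {b ∈ B | f * b ∈ A}.image (f * ·)) A' hc
  refine ⟨F, hFA', hcard.trans (Nat.cast_le.2 (card_le_card ?_)), fun f hf => ?_⟩
  · refine biUnion_subset.2 fun f _ => image_subset_iff.2 fun b hb => (mem_filter.1 hb).2
  · refine (Nat.cast_le.2 ?_).trans (hF f hf)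
    refine card_le_card_of_injOn (f * ·) (fun b hb => ?_) (mul_right_injective f).injOn
    obtain ⟨hb, hfb⟩ := mem_filter.1 hb
    obtain ⟨hfbA, hfbF⟩ := mem_sdiff.1 hfb
    refine mem_sdiff.2 ⟨mem_image_of_mem _ (mem_filter.2 ⟨hb, hfbA⟩), fun hmem => hfbF ?_⟩
    obtain ⟨f', hf', hmem⟩ := mem_biUnion.1 hmem
    obtain ⟨b', hb', hfb'⟩ := mem_image.1 hmem
    have hfb : f' * b' = f * b := hfb'
    exact hfb ▸ mul_mem_mul hf' (mem_filter.1 hb').1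

theorem exists_subset_card_symmDiff_mul_le {γ κ : ℝ} (hB : B.Nonempty) (hγ : 0 < γ) (hκ : 0 < κ)
    (hstab : ∀ b ∈ B, #((A * {b}) ∆ A) ≤ r) :
    ∃ F ⊆ A, γ * #B * #F ≤ #A ∧ #(A ∆ (F * B)) ≤ (γ + κ / γ) * #A + (r + r / κ) := by
  let A' : Finset G := {g ∈ A | #{b ∈ B | g * b ∉ A} ≤ κ * #B}
  have hA' : κ * #(A \ A') ≤ r := by
    refine mul_card_le_of_mul_card_le_card_filter hB hstab fun g hg => ?_
    obtain ⟨hgA, hgA'⟩ := mem_sdiff.1 hg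
    have hlt : κ * #B < #{b ∈ B | g * b ∉ A} := by simpa [A', hgA] using hgA'
    simpa [hgA] using hlt.le
  obtain ⟨F, hFA', hcard, hF⟩ := exists_subset_forall_card_filter_mul_mem_sdiff_le A B A'
    (show 0 ≤ γ * #B by positivity)
  refine ⟨F, hFA'.trans (filter_subset _ _), hcard, ?_⟩
  have huncovered := card_le_of_forall_card_filter_mul_mem_le hB sdiff_subset hstab hF
  have hexcess : #((F * B) \ A) ≤ κ * #B * #F :=
    card_mul_sdiff_le fun f hf => (mem_filter.1 (hFA' hf)).2
  calc (#(A ∆ (F * B)) : ℝ) ≤ #(A \ (F * B)) + #((F * B) \ A) := mod_cast card_union_le _ _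
    _ ≤ (γ * #A' + (r + #(A \ A'))) + κ / γ * (γ * #B * #F) := by
        refine add_le_add huncovered (hexcess.trans_eq ?_)
        field_simp
    _ ≤ (γ * #A + (r + r / κ)) + κ / γ * #A := by
        gcongr
        · exact filter_subset _ _
        · rwa [le_div_iff₀' hκ]
    _ = _ := by ring

theorem mul_card_le_card_filter_of_mem_Zl {ε : ℝ} {g : G} (hg : g ∈ Zl (A : Set G) B ε) :
    ε * #B ≤ #{b ∈ B | ¬(g ∈ A ↔ g * b ∈ A)} := by
  obtain ⟨hin, hout⟩ : ε * (B : Set G).ncard ≤ (g • (B : Set G) ∩ A).ncard ∧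
      ε * (B : Set G).ncard ≤ (g • (B : Set G) \ A).ncard := le_min_iff.1 hg
  rw [Set.ncard_coe_finset, ncard_smul_inter] at hin
  rw [Set.ncard_coe_finset, Set.sdiff_eq, ncard_smul_inter] at hout
  rw [← Set.ncard_coe_finset {b ∈ B | ¬(g ∈ A ↔ g * b ∈ A)}, coe_filter]
  by_cases hgA : g ∈ A
  · simpa [hgA] using hout
  · simpa [hgA] using hin

end AlmostInvariantSets

section FiniteGroup

open Finset

theorem ncard_le_of_mul_ncard_mul_ncard_le {α : Type*} [Finite α] {A B F : Set α}
    {N γ : ℝ} (hB : B.Nonempty) (hγ : 0 < γ) (hF : γ * B.ncard * F.ncard ≤ A.ncard)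
    (hcard : Nat.card α ≤ N * B.ncard) : F.ncard ≤ N / γ := by
  have hBpos : (0 : ℝ) < B.ncard := mod_cast (Set.ncard_pos B.toFinite).2 hB
  have hA : (A.ncard : ℝ) ≤ Nat.card α := mod_cast Set.ncard_le_card A
  rw [le_div_iff₀ hγ]
  refine le_of_mul_le_mul_right ?_ hBpos
  linarith

theorem nonempty_of_mul_card_le_ncard {α : Type*} [Finite α] [Nonempty α] {A : Set α} {c : ℝ}
    (hc : 0 < c) (hA : c * Nat.card α ≤ A.ncard) : A.Nonempty := by
  have hα : (0 : ℝ) < Nat.card α := mod_cast Nat.card_pos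
  have hpos : (0 : ℝ) < A.ncard := (mul_pos hc hα).trans_le hA
  exact Set.nonempty_of_ncard_ne_zero (mod_cast hpos.ne')

variable {G : Type*} [Group G] [Finite G] {A B : Set G}

theorem mul_ncard_Zl_le {r ε : ℝ} (hB : B.Nonempty)
    (hstab : ∀ b ∈ B, ((A * {b}) ∆ A).ncard ≤ r) : ε * (Zl A B ε).ncard ≤ r := by
  classical
  lift A to Finset G using A.toFinite
  lift B to Finset G using B.toFinite
  rw [Set.ncard_eq_toFinset_card _]
  refine mul_card_le_of_mul_card_le_card_filter (A := A) (mod_cast hB) (fun b hb => ?_) fun g hg =>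
    mul_card_le_card_filter_of_mem_Zl ((Set.Finite.mem_toFinset _).1 hg)
  simpa [← coe_singleton, ← coe_mul, ← coe_symmDiff] using hstab b hb

theorem exists_subset_ncard_symmDiff_mul_lt {ε : ℝ} (hA : A.Nonempty) (hB : B.Nonempty)
    (hε : 0 < ε) (hε' : ε < 1)
    (hstab : ∀ b ∈ B, ((A * {b}) ∆ A).ncard ≤ ε ^ 3 / 128 * A.ncard) :
    ∃ F ⊆ A, ε / 4 * B.ncard * F.ncard ≤ A.ncard ∧ (A ∆ (F * B)).ncard < ε * A.ncard := by
  classical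
  lift A to Finset G using A.toFinite
  lift B to Finset G using B.toFinite
  obtain ⟨F, hFA, hcard, hF⟩ := exists_subset_card_symmDiff_mul_le (A := A) (γ := ε / 4)
    (κ := ε ^ 2 / 16) (mod_cast hB) (by positivity) (by positivity) fun b hb => by
      simpa [← coe_singleton, ← coe_mul, ← coe_symmDiff] using hstab b hb
  refine ⟨F, mod_cast hFA, by simpa using hcard, ?_⟩
  have : (0 : ℝ) < #A := mod_cast (coe_nonempty.1 hA).card_pos
  have hcube : ε ^ 3 < ε := pow_lt_self_of_lt_one₀ hε hε' (by norm_num)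
  rw [← coe_mul, ← coe_symmDiff, Set.ncard_coe_finset, Set.ncard_coe_finset]
  calc (#(A ∆ (F * B)) : ℝ)
      ≤ (ε / 4 + ε ^ 2 / 16 / (ε / 4)) * #A +
        (ε ^ 3 / 128 * #A + ε ^ 3 / 128 * #A / (ε ^ 2 / 16)) := by simpa using hF
    _ = (5 / 8 * ε + ε ^ 3 / 128) * #A := by
        field_simp
        ring
    _ < ε * #A := by
        gcongr
        linarith

end FiniteGroup

section BohrNeighborhoodInStabilizer

open scoped Matrix.Norms.L2Operator

theorem exists_isBohrNbhd_subset_stR (d : ℕ) {α θ : ℝ} (hα : 0 < α) (hθ : 0 < θ) (hθ' : θ < 1) :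
    ∃ δ : ℝ, 0 < δ ∧ δ < 1 ∧ ∃ N : ℕ, ∀ (G : Type*) [Group G] [Finite G] (A : Set G),
      vcDim (rightFam A A) ≤ d → α * Nat.card G ≤ A.ncard →
      ∃ (m n : ℕ) (B : Set G), 1 ≤ m ∧ m ≤ N ∧ 1 ≤ n ∧ n ≤ N ∧ IsBohrNbhd δ m n B ∧
        B ⊆ stR A θ ∧ Nat.card G ≤ N * B.ncard := by
  let δ := θ / 5
  have hδ : 0 < δ := by positivity
  have hδ' : δ < 1 / 2 := by linarith [show δ = θ / 5 from rfl]
  obtain ⟨K, hK⟩ := exists_ncard_le_mul_ncard_stR d hα (pow_pos hδ 2)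
  choose M hM using fun m => exists_isBohrNbhd_of_card_le m hδ hδ'.le
  let c := α / (K + 1)
  let D := ⌊1 / (c * δ ^ 2)⌋₊
  have hM_le : ∀ m ≤ D, M m ≤ D + ∑ m ∈ Finset.range (D + 1), M m := fun m hm =>
    (Finset.single_le_sum_of_canonicallyOrdered (Finset.mem_range_succ_iff.2 hm)).trans
      (Nat.le_add_left _ _)
  refine ⟨δ, hδ, by linarith, D + ∑ m ∈ Finset.range (D + 1), M m, fun G _ _ A hvc hαA => ?_⟩
  have := Fintype.ofFinite G
  have hstab : c * Nat.card G ≤ (stR A (δ ^ 2)).ncard := by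
    have hle : (A.ncard : ℝ) ≤ (K + 1) * (stR A (δ ^ 2)).ncard :=
      mod_cast (hK G A hvc hαA).trans (by gcongr; exact K.le_succ)
    rw [div_mul_eq_mul_div, div_le_iff₀' (by positivity)]
    exact hαA.trans hle
  obtain ⟨m, hm, hmD, τ, hτ⟩ :=
    exists_hom_unitaryGroup_ncard_symmDiff_le (nonempty_of_mul_card_le_ncard hα hαA)
      (by positivity) hδ hδ' hstab
  obtain ⟨hcard, n, hn, hnM, hbohr⟩ := hM m G τ
  have hmD : m ≤ D := Nat.le_floor hmD
  refine ⟨m, n, _, hm, hmD.trans (Nat.le_add_right _ _), hn, hnM.trans (hM_le m hmD), hbohr,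
    fun x hx => ?_, hcard.trans (Nat.mul_le_mul_right _ (hM_le m hmD))⟩
  have hdist : dist (τ x) 1 < δ := hx
  calc (((A * {x}) ∆ A).ncard : ℝ) ≤ (4 * δ + dist (τ x) 1) ^ 2 * A.ncard := hτ x
    _ ≤ (4 * δ + δ) ^ 2 * A.ncard := by gcongr
    _ = θ ^ 2 * A.ncard := by ring
    _ ≤ θ * A.ncard := by
        gcongr
        exact pow_le_of_le_one hθ.le hθ'.le two_ne_zero

end BohrNeighborhoodInStabilizer

theorem nip_arithmetic_regularity'_general (d : ℕ) {α ε : ℝ} (hα : 0 < α) (hε : 0 < ε)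
    (hε' : ε < 1) :
    ∃ C : ℝ, ∀ (G : Type*) [Group G] [Finite G] (A : Set G),
      vcDim (rightFam A A) ≤ d → α * Nat.card G ≤ A.ncard →
      ∃ (δ : ℝ) (m n : ℕ) (B : Set G), 0 < δ ∧ δ < 1 ∧ 1 ≤ m ∧ 1 ≤ n ∧
        1 / δ ≤ C ∧ m ≤ C ∧ n ≤ C ∧ IsBohrNbhd δ m n B ∧ B ⊆ stR A ε ∧
        (∃ F ⊆ A, F.ncard ≤ C ∧ (A ∆ (F * B)).ncard < ε * A.ncard) ∧
        (Zl A B ε).ncard ≤ ε * A.ncard := by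
  have hθ : ε ^ 3 / 128 ≤ ε ^ 2 := by nlinarith [mul_pos hε hε]
  have hsq : ε ^ 2 < ε := pow_lt_self_of_lt_one₀ hε hε' one_lt_two
  obtain ⟨δ, hδ, hδ', N, hN⟩ := exists_isBohrNbhd_subset_stR d hα
    (show 0 < ε ^ 3 / 128 by positivity) (by linarith)
  refine ⟨1 / δ + N + N / (ε / 4), fun G _ _ A hvc hαA => ?_⟩
  obtain ⟨m, n, B, hm, hmN, hn, hnN, hbohr, hBst, hcard⟩ := hN G A hvc hαA
  have hB : B.Nonempty := Set.nonempty_of_ncard_ne_zero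
    (Nat.pos_of_mul_pos_left (Nat.card_pos.trans_le hcard)).ne'
  obtain ⟨F, hFA, hFcard, hF⟩ := exists_subset_ncard_symmDiff_mul_lt
    (nonempty_of_mul_card_le_ncard hα hαA) hB hε hε' hBst
  have hFN : F.ncard ≤ (N : ℝ) / (ε / 4) :=
    ncard_le_of_mul_ncard_mul_ncard_le hB (by positivity) hFcard (mod_cast hcard)
  have hZ : ε * (Zl A B ε).ncard ≤ ε * (ε * A.ncard) := by
    refine (mul_ncard_Zl_le hB hBst).trans ?_
    rw [← mul_assoc, ← sq]
    gcongr
  have hmN : (m : ℝ) ≤ N := mod_cast hmN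
  have hnN : (n : ℝ) ≤ N := mod_cast hnN
  have hδC : 0 < 1 / δ := by positivity
  have : (0 : ℝ) ≤ N / (ε / 4) := by positivity
  exact ⟨δ, m, n, B, hδ, hδ', hm, hn, by linarith, by linarith, by linarith, hbohr,
    hBst.trans (stR_mono A (by linarith)), ⟨F, hFA, by linarith, hF⟩,
    le_of_mul_le_mul_left hZ hε⟩

/-- Theorem 4.1 of the paper: for `d ≥ 0` and `α, ε ∈ (0,1)` there is a
constant `C` such that every nonempty `A ⊆ G` (`G` a finite group) with
`max(VC^ℓ_A(A), VC^r_A(A)) ≤ d` and `|A| ≥ α|G|` admits a `(δ,m,n)`-Bohr neighborhood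
`B ⊆ St^r_ε(A)` of complexity at most `C` satisfying structure and regularity. -/
theorem nip_arithmetic_regularity' (d : ℕ) (α ε : ℝ)
    (hα0 : 0 < α) (hα1 : α < 1) (hε0 : 0 < ε) (hε1 : ε < 1) :
    ∃ C : ℝ, ∀ (G : Type*) [Group G] [Fintype G] (A : Set G), A.Nonempty →
      vcDim (leftFam A A) ≤ (d : ℕ∞) → vcDim (rightFam A A) ≤ (d : ℕ∞) →
      α * Nat.card G ≤ A.ncard →
      ∃ (δ : ℝ) (m n : ℕ) (B : Set G),
        0 < δ ∧ δ < 1 ∧ 1 ≤ m ∧ 1 ≤ n ∧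
        1 / δ ≤ C ∧ (m : ℝ) ≤ C ∧ (n : ℝ) ≤ C ∧
        IsBohrNbhd δ m n B ∧ B ⊆ stR A ε ∧
        (∃ F ⊆ A, (F.ncard : ℝ) ≤ C ∧
          ((A ∆ (F * B)).ncard : ℝ) < ε * A.ncard) ∧
        ((Zl A B ε).ncard : ℝ) ≤ ε * A.ncard := by
  obtain ⟨C, hC⟩ := nip_arithmetic_regularity'_general d hα0 hε0 hε1
  exact ⟨C, fun G _ _ A _ _ hvc hαA => hC G A hvc hαA⟩
end

section
/- Let G be a group and A ⊆ G a nonempty finite set. Let d = VC^ℓ_A(A), k = |A²|/|A|, and m = |AA⁻¹|/|A|, and assume d ≥ 1. Then for any integers n ≥ u ≥ 2 and any ε ∈ (0,1), there is a symmetric set B ⊆ G such that |B^u| ≤ u^{d(d+1)}|B|, B^n ⊆ St^ℓ_ε(A), and |A| ≤ m^{1/d}(30kn/ε)^{d+1}|B|. -/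
open scoped Pointwise symmDiff

/-!
Put `δⱼ = (uε/n) / u^j`. Each `stL A δⱼ` is symmetric, its `u`-th power lies in the previous one,
and its `n`-th power lies in `stL A ε`. Its cardinality is at most `|AA⁻¹|`, and it cannot be much
smaller than `|A|`: if `T ⊆ A` is maximal such that the translates of `A` by `T` are pairwise
`δⱼ|A|`-separated, then `A ⊆ T * stL A δⱼ`, while Haussler's packing theorem gives
`|T| ≤ (30k/δⱼ)^d`, with `k = |A²|/|A|`. These bounds leave no room for `|stL A δⱼ|` to drop by a
factor `u^{d(d+1)}` at many consecutive scales, and `B` is taken at the first scale where it does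
not.

Haussler's theorem is proved by double counting edges of the one-inclusion graph of the traces of
the family on a random sample, each edge weighted by the smaller number of sets realising one of
its two ends.
-/

section SetFamily

open Finset

variable {ι : Type*} [DecidableEq ι]

lemma notMem_of_shatters {𝒜 : Finset (Finset ι)} {s : Finset ι} {a : ι}
    (h𝒜 : ∀ t ∈ 𝒜, a ∉ t) (hs : 𝒜.Shatters s) : a ∉ s :=
  have ⟨t, ht, hst⟩ := hs.exists_superset
  notMem_mono hst (h𝒜 t ht)

lemma vcDim_le_iff_forall_shatters {𝒜 : Finset (Finset ι)} {d : ℕ} :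
    𝒜.vcDim ≤ d ↔ ∀ s, 𝒜.Shatters s → #s ≤ d := by
  simp [Finset.vcDim, Finset.sup_le_iff]

lemma vcDim_image_erase_le (𝒜 : Finset (Finset ι)) (a : ι) :
    (𝒜.image fun q ↦ q.erase a).vcDim ≤ 𝒜.vcDim := by
  refine vcDim_le_iff_forall_shatters.2 fun s hs ↦ Finset.Shatters.card_le_vcDim fun t ht ↦ ?_
  have ha : a ∉ s := notMem_of_shatters (by simp) hs
  obtain ⟨_, hu, rfl⟩ := hs ht
  obtain ⟨q, hq, rfl⟩ := mem_image.1 hu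
  exact ⟨q, hq, by rw [inter_erase, erase_eq_of_notMem (notMem_mono inter_subset_left ha)]⟩

lemma vcDim_memberSubfamily_inter_nonMemberSubfamily_lt {𝒜 : Finset (Finset ι)} {a : ι}
    (h : (𝒜.memberSubfamily a ∩ 𝒜.nonMemberSubfamily a).Nonempty) :
    (𝒜.memberSubfamily a ∩ 𝒜.nonMemberSubfamily a).vcDim < 𝒜.vcDim := by
  obtain ⟨s, hs, hcard⟩ := exists_mem_eq_sup _ ⟨∅, mem_shatterer.2 (shatters_empty.2 h)⟩ card
  rw [mem_shatterer] at hs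
  have ha : a ∉ s := by
    refine notMem_of_shatters (fun t ht ↦ ?_) hs
    exact (mem_nonMemberSubfamily.1 (mem_inter.1 ht).2).2
  have hshatters : 𝒜.Shatters (insert a s) := fun t ht ↦ by
    obtain ⟨q, hq, hqt⟩ := hs (subset_insert_iff.1 ht)
    rw [mem_inter, mem_memberSubfamily, mem_nonMemberSubfamily] at hq
    by_cases hat : a ∈ t
    · exact ⟨insert a q, hq.1.1, by rw [← insert_inter_distrib, hqt, insert_erase hat]⟩
    · exact ⟨q, hq.2.1, by rw [insert_inter_of_notMem hq.1.2, hqt, erase_eq_of_notMem hat]⟩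
  rw [Finset.vcDim, hcard, ← Nat.add_one_le_iff, ← card_insert_of_notMem ha]
  exact hshatters.card_le_vcDim

lemma card_le_sum_choose_of_vcDim_le [Fintype ι] {𝒜 : Finset (Finset ι)} {d : ℕ}
    (h𝒜 : 𝒜.vcDim ≤ d) : #𝒜 ≤ ∑ k ∈ Iic d, (Fintype.card ι).choose k :=
  𝒜.card_le_card_shatterer.trans <| card_shatterer_le_sum_vcDim.trans <|
    sum_le_sum_of_subset (Iic_subset_Iic.2 h𝒜)

lemma min_add_min_le_min_max_add_min_min {R : Type*} [AddCommMonoid R] [LinearOrder R]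
    [IsOrderedAddMonoid R] (a b c e : R) :
    min a c + min b e ≤ min (max a b) (max c e) + min (min a b) (min c e) := by
  rw [← max_add_min (min a c)]
  refine add_le_add (max_le ?_ ?_) (min_min_min_comm ..).le
  · exact min_le_min (le_max_left ..) (le_max_left ..)
  · exact min_le_min (le_max_right ..) (le_max_right ..)

lemma sum_powerset_erase_min_insert_le {R : Type*} [AddCommMonoid R] [LinearOrder R]
    [IsOrderedAddMonoid R] {U : Finset ι} {a i : ι} (ha : a ∉ U) (hi : i ∈ U)
    (w : Finset ι → R) :
    ∑ q ∈ ((insert a U).erase i).powerset, min (w q) (w (insert i q)) ≤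
      ∑ q ∈ (U.erase i).powerset,
          min (max (w q) (w (insert a q))) (max (w (insert i q)) (w (insert a (insert i q)))) +
        ∑ q ∈ (U.erase i).powerset,
          min (min (w q) (w (insert a q))) (min (w (insert i q)) (w (insert a (insert i q)))) := by
  have hai : a ≠ i := (ne_of_mem_of_not_mem hi ha).symm
  rw [erase_insert_of_ne hai, sum_powerset_insert (fun h ↦ ha (mem_of_mem_erase h)),
    ← sum_add_distrib, ← sum_add_distrib]
  refine sum_le_sum fun q _ ↦ ?_
  rw [insert_comm a i]
  exact min_add_min_le_min_max_add_min_min ..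

/-- The family of subsets of `U` on which `w` does not vanish. -/
def weightSupport {R : Type*} [Zero R] [DecidableEq R] (U : Finset ι) (w : Finset ι → R) :
    Finset (Finset ι) :=
  {q ∈ U.powerset | w q ≠ 0}

section Weight

variable {R : Type*} [CommSemiring R] [LinearOrder R] [CanonicallyOrderedAdd R]
  {U : Finset ι} {a : ι}

lemma weightSupport_max_insert (ha : a ∉ U) (w : Finset ι → R) :
    weightSupport U (fun q ↦ max (w q) (w (insert a q))) =
      (weightSupport (insert a U) w).image fun q ↦ q.erase a := by
  rw [← memberSubfamily_union_nonMemberSubfamily]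
  ext q
  simp only [weightSupport, mem_filter, mem_powerset, mem_union, mem_memberSubfamily,
    mem_nonMemberSubfamily, ← pos_iff_ne_zero, lt_max_iff]
  grind

lemma weightSupport_min_insert (ha : a ∉ U) (w : Finset ι → R) :
    weightSupport U (fun q ↦ min (w q) (w (insert a q))) =
      (weightSupport (insert a U) w).memberSubfamily a ∩
        (weightSupport (insert a U) w).nonMemberSubfamily a := by
  ext q
  simp only [weightSupport, mem_filter, mem_powerset, mem_inter, mem_memberSubfamily,
    mem_nonMemberSubfamily, ← pos_iff_ne_zero, lt_min_iff]
  grind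

variable [IsStrictOrderedRing R]

lemma vcDim_min_insert_add_one_mul_sum_le (ha : a ∉ U) (w : Finset ι → R) :
    (((weightSupport U fun q ↦ min (w q) (w (insert a q))).vcDim : R) + 1) *
        ∑ q ∈ U.powerset, min (w q) (w (insert a q)) ≤
      ((weightSupport (insert a U) w).vcDim : R) *
        ∑ q ∈ U.powerset, min (w q) (w (insert a q)) := by
  rcases (weightSupport U fun q ↦ min (w q) (w (insert a q))).eq_empty_or_nonempty with h | h
  · have hzero : ∑ q ∈ U.powerset, min (w q) (w (insert a q)) = 0 :=
      sum_eq_zero fun q hq ↦ not_not.1 (filter_eq_empty_iff.1 h hq)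
    simp [hzero]
  · rw [weightSupport_min_insert ha] at h ⊢
    gcongr
    exact_mod_cast vcDim_memberSubfamily_inter_nonMemberSubfamily_lt h

/-- The induction on `U` replaces `w` by the maximum and the minimum of its two sections in a
direction `a`; the VC-dimension drops for the minimum, which pays for the edges in direction `a`. -/
theorem sum_min_insert_le_vcDim_mul_sum (U : Finset ι) (w : Finset ι → R) :
    ∑ i ∈ U, ∑ q ∈ (U.erase i).powerset, min (w q) (w (insert i q)) ≤
      ((weightSupport U w).vcDim : R) * ∑ q ∈ U.powerset, w q := by
  induction U using Finset.induction_on generalizing w with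
  | empty => simp
  | insert a U ha ih =>
    set d := (weightSupport (insert a U) w).vcDim
    let upper : Finset ι → R := fun q ↦ max (w q) (w (insert a q))
    let lower : Finset ι → R := fun q ↦ min (w q) (w (insert a q))
    have hd : (weightSupport U upper).vcDim ≤ d := by
      rw [weightSupport_max_insert ha]
      exact vcDim_image_erase_le _ _
    calc ∑ i ∈ insert a U, ∑ q ∈ ((insert a U).erase i).powerset, min (w q) (w (insert i q))
        ≤ ∑ q ∈ U.powerset, lower q +
          (∑ i ∈ U, ∑ q ∈ (U.erase i).powerset, min (upper q) (upper (insert i q)) +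
            ∑ i ∈ U, ∑ q ∈ (U.erase i).powerset, min (lower q) (lower (insert i q))) := by
          rw [sum_insert ha, erase_insert ha, ← sum_add_distrib]
          gcongr with i hi
          exact sum_powerset_erase_min_insert_le ha hi w
      _ ≤ ∑ q ∈ U.powerset, lower q +
          (((weightSupport U upper).vcDim : R) * ∑ q ∈ U.powerset, upper q +
            ((weightSupport U lower).vcDim : R) * ∑ q ∈ U.powerset, lower q) := by
          gcongr
          exacts [ih upper, ih lower]
      _ = ((weightSupport U upper).vcDim : R) * ∑ q ∈ U.powerset, upper q +
            (((weightSupport U lower).vcDim : R) + 1) * ∑ q ∈ U.powerset, lower q := by ring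
      _ ≤ (d : R) * ∑ q ∈ U.powerset, upper q + (d : R) * ∑ q ∈ U.powerset, lower q :=
          add_le_add (by gcongr) (vcDim_min_insert_add_one_mul_sum_le ha w)
      _ = (d : R) * ∑ q ∈ (insert a U).powerset, w q := by
          rw [← mul_add, ← sum_add_distrib, sum_powerset_insert ha, ← sum_add_distrib]
          simp only [upper, lower, max_add_min]

end Weight

section Sampling

variable {α : Type*}

lemma sum_piFinset_sum_update {M : Type*} [AddCommMonoid M] [Fintype ι] (X : Finset α) (i : ι)
    (g : (ι → α) → M) :
    ∑ σ ∈ Fintype.piFinset fun _ ↦ X, ∑ a ∈ X, g (Function.update σ i a) =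
      #X • ∑ σ ∈ Fintype.piFinset fun _ ↦ X, g σ := by
  set P := (Fintype.piFinset fun _ : ι ↦ X) ×ˢ X
  let swap : (ι → α) × α → (ι → α) × α := fun p ↦ (Function.update p.1 i p.2, p.1 i)
  have hmaps : ∀ p ∈ P, swap p ∈ P := fun p hp ↦ by
    simp only [P, mem_product, Fintype.mem_piFinset] at hp ⊢
    exact ⟨(Function.forall_update_iff p.1 fun _ b ↦ b ∈ X).2 ⟨hp.2, fun j _ ↦ hp.1 j⟩, hp.1 i⟩
  have hinvol : ∀ p ∈ P, swap (swap p) = p := fun p _ ↦ by simp [swap]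
  have hsum : ∑ p ∈ P, g (Function.update p.1 i p.2) = ∑ p ∈ P, g p.1 :=
    sum_nbij' swap swap hmaps hmaps hinvol hinvol fun _ _ ↦ rfl
  rw [← sum_product', hsum, sum_product]
  simp [smul_sum]

variable [DecidableEq α]

/-- The trace of `f` on the sample `σ : ι → α`, as a set of sample indices: unlike a restriction of
`f` to the range of `σ`, it keeps track of repeated sample points. -/
def sampleTrace [Fintype ι] (σ : ι → α) (f : Finset α) : Finset ι :=
  {i | σ i ∈ f}

lemma vcDim_image_sampleTrace_le [Fintype ι] (ℱ : Finset (Finset α)) (σ : ι → α) :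
    (ℱ.image (sampleTrace σ)).vcDim ≤ ℱ.vcDim := by
  refine vcDim_le_iff_forall_shatters.2 fun s hs ↦ ?_
  have htrace : ∀ t ⊆ s, ∃ f ∈ ℱ, ∀ i ∈ s, σ i ∈ f ↔ i ∈ t := fun t ht ↦ by
    obtain ⟨_, hq, rfl⟩ := hs ht
    obtain ⟨f, hf, rfl⟩ := mem_image.1 hq
    exact ⟨f, hf, fun i hi ↦ by simp [sampleTrace, hi]⟩
  have hinj : Set.InjOn σ s := fun i hi j hj hij ↦ by
    obtain ⟨f, -, hf⟩ := htrace {i} (singleton_subset_iff.2 hi)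
    have hif : σ j ∈ f := hij ▸ (hf i hi).2 (mem_singleton_self i)
    exact (mem_singleton.1 ((hf j hj).1 hif)).symm
  rw [← card_image_of_injOn hinj]
  refine Finset.Shatters.card_le_vcDim fun t ht ↦ ?_
  obtain ⟨f, hf, hft⟩ := htrace {i ∈ s | σ i ∈ t} (filter_subset _ _)
  refine ⟨f, hf, ?_⟩
  ext a
  grind

/-- The number of members of `ℱ` whose trace on the sample `σ` is `q`. -/
def traceCount [Fintype ι] (ℱ : Finset (Finset α)) (σ : ι → α) (q : Finset ι) : ℕ :=
  #{f ∈ ℱ | sampleTrace σ f = q}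

/-- Haussler's weight of the edges in direction `i` of the one-inclusion graph of the traces on
`σ`: an edge `q — insert i q` weighs the smaller of the two trace counts of its ends. -/
def edgeWeight [Fintype ι] (ℱ : Finset (Finset α)) (σ : ι → α) (i : ι) : ℕ :=
  ∑ q ∈ (univ.erase i).powerset, min (traceCount ℱ σ q) (traceCount ℱ σ (insert i q))

lemma sum_edgeWeight_le [Fintype ι] (ℱ : Finset (Finset α)) (σ : ι → α) :
    ∑ i, edgeWeight ℱ σ i ≤ ℱ.vcDim * #ℱ := by
  have hsupport : weightSupport univ (traceCount ℱ σ) ⊆ ℱ.image (sampleTrace σ) := fun q hq ↦ by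
    obtain ⟨f, hf⟩ := card_ne_zero.1 (mem_filter.1 hq).2
    rw [mem_filter] at hf
    exact mem_image.2 ⟨f, hf⟩
  have hsum : ∑ q, traceCount ℱ σ q = #ℱ :=
    (card_eq_sum_card_fiberwise fun f _ ↦ mem_univ (sampleTrace σ f)).symm
  calc ∑ i, edgeWeight ℱ σ i
      ≤ (weightSupport univ (traceCount ℱ σ)).vcDim * ∑ q, traceCount ℱ σ q := by
        have h := sum_min_insert_le_vcDim_mul_sum univ (traceCount ℱ σ)
        rwa [powerset_univ, Nat.cast_id] at h
    _ ≤ ℱ.vcDim * #ℱ := by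
        rw [hsum]
        gcongr
        exact (vcDim_mono hsupport).trans (vcDim_image_sampleTrace_le ℱ σ)

lemma sampleTrace_update [Fintype ι] (σ : ι → α) (i : ι) (a : α) (f : Finset α) :
    sampleTrace (Function.update σ i a) f =
      if a ∈ f then insert i ((sampleTrace σ f).erase i) else (sampleTrace σ f).erase i := by
  ext j
  by_cases hj : j = i
  · subst hj
    split_ifs with ha <;> simp [sampleTrace, ha]
  · split_ifs <;> simp [sampleTrace, hj]

lemma traceCount_update_of_notMem [Fintype ι] (ℱ : Finset (Finset α)) (σ : ι → α) {i : ι}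
    {q : Finset ι} (hi : i ∉ q) (a : α) :
    traceCount ℱ (Function.update σ i a) q =
      #{f ∈ ℱ.filter fun f ↦ (sampleTrace σ f).erase i = q | a ∉ f} := by
  rw [traceCount, filter_filter]
  congr 1
  refine filter_congr fun f _ ↦ ?_
  rw [sampleTrace_update]
  grind

lemma traceCount_update_insert [Fintype ι] (ℱ : Finset (Finset α)) (σ : ι → α) {i : ι}
    {q : Finset ι} (hi : i ∉ q) (a : α) :
    traceCount ℱ (Function.update σ i a) (insert i q) =
      #{f ∈ ℱ.filter fun f ↦ (sampleTrace σ f).erase i = q | a ∈ f} := by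
  rw [traceCount, filter_filter]
  congr 1
  refine filter_congr fun f _ ↦ ?_
  rw [sampleTrace_update]
  have hif : i ∉ (sampleTrace σ f).erase i := notMem_erase i _
  split_ifs with ha
  · simp only [ha, and_true]
    exact ⟨fun h ↦ by rw [← erase_insert hif, h, erase_insert hi], congrArg (insert i)⟩
  · simp only [ha, and_false, iff_false]
    exact fun h ↦ hif (h ▸ mem_insert_self i q)

/-- The set `m` is found by majority vote at each point of `X`. -/
lemma exists_sum_min_card_filter_mem_eq {ℱ : Finset (Finset α)} {X : Finset α}
    (hX : ∀ f ∈ ℱ, f ⊆ X) :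
    ∃ m, ∑ a ∈ X, min #{f ∈ ℱ | a ∉ f} #{f ∈ ℱ | a ∈ f} = ∑ f ∈ ℱ, #(f ∆ m) := by
  let m : Finset α := {a ∈ X | #{f ∈ ℱ | a ∉ f} < #{f ∈ ℱ | a ∈ f}}
  have hmin : ∀ a ∈ X,
      min #{f ∈ ℱ | a ∉ f} #{f ∈ ℱ | a ∈ f} = #{f ∈ ℱ | a ∈ f ∆ m} := fun a ha ↦ by
    by_cases ham : a ∈ m
    · have h := (mem_filter.1 ham).2
      simp only [min_eq_left h.le, mem_symmDiff, ham, not_true_eq_false, and_false, true_and,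
        false_or]
    · have h : ¬ #{f ∈ ℱ | a ∉ f} < #{f ∈ ℱ | a ∈ f} := fun h ↦ ham (mem_filter.2 ⟨ha, h⟩)
      simp only [min_eq_right (not_lt.1 h), mem_symmDiff, ham, not_false_eq_true, and_true,
        false_and, or_false]
  refine ⟨m, ?_⟩
  rw [sum_congr rfl hmin]
  refine (sum_card_bipartiteAbove_eq_sum_card_bipartiteBelow fun a f ↦ a ∈ f ∆ m).trans ?_
  refine sum_congr rfl fun f hf ↦ congrArg card ?_
  have hfm : f ∆ m ⊆ X :=
    symmDiff_le_sup.trans (union_subset (hX f hf) (filter_subset _ _))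
  rw [bipartiteBelow, filter_mem_eq_inter, inter_eq_right.2 hfm]

lemma mul_card_sub_one_le_sum_card_symmDiff {ℱ : Finset (Finset α)} {D : ℝ}
    (hℱ : ℱ.Nonempty) (hD : (ℱ : Set (Finset α)).Pairwise fun f g ↦ D ≤ #(f ∆ g))
    (m : Finset α) : D * (#ℱ - 1) ≤ 2 * (∑ f ∈ ℱ, #(f ∆ m) : ℕ) := by
  obtain ⟨g, hg, hmin⟩ := exists_min_image ℱ (fun f ↦ #(f ∆ m)) hℱ
  have hfar : ∀ f ∈ ℱ.erase g, D ≤ 2 * #(f ∆ m) := fun f hf ↦ by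
    obtain ⟨hfg, hf⟩ := mem_erase.1 hf
    have htri : #(f ∆ g) ≤ #(f ∆ m) + #(g ∆ m) := by
      rw [symmDiff_comm g m]
      exact (card_le_card (symmDiff_triangle f m g)).trans (card_union_le _ _)
    have : #(f ∆ g) ≤ 2 * #(f ∆ m) := by linarith [hmin f hf]
    exact (hD hf hg hfg).trans (mod_cast this)
  calc D * (#ℱ - 1) = ∑ _ ∈ ℱ.erase g, D := by
        rw [sum_const, nsmul_eq_mul, cast_card_erase_of_mem hg, mul_comm]
    _ ≤ ∑ f ∈ ℱ.erase g, 2 * (#(f ∆ m) : ℝ) := sum_le_sum hfar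
    _ ≤ ∑ f ∈ ℱ, 2 * (#(f ∆ m) : ℝ) :=
        sum_le_sum_of_subset_of_nonneg (erase_subset g ℱ) fun _ _ _ ↦ by positivity
    _ = 2 * (∑ f ∈ ℱ, #(f ∆ m) : ℕ) := by rw [← mul_sum, Nat.cast_sum]

lemma mul_card_sub_card_image_le_sum_edgeWeight [Fintype ι] {ℱ : Finset (Finset α)}
    {X : Finset α} {D : ℝ} (hX : ∀ f ∈ ℱ, f ⊆ X)
    (hD : (ℱ : Set (Finset α)).Pairwise fun f g ↦ D ≤ #(f ∆ g)) (σ : ι → α) (i : ι) :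
    D * (#ℱ - #(ℱ.image fun f ↦ (sampleTrace σ f).erase i)) ≤
      2 * (∑ a ∈ X, edgeWeight ℱ (Function.update σ i a) i : ℕ) := by
  set e : Finset α → Finset ι := fun f ↦ (sampleTrace σ f).erase i
  have hclass : ∀ q ∈ ℱ.image e, D * ((#{f ∈ ℱ | e f = q} : ℝ) - 1) ≤
      2 * (∑ a ∈ X, min (traceCount ℱ (Function.update σ i a) q)
        (traceCount ℱ (Function.update σ i a) (insert i q)) : ℕ) := fun q hq ↦ by
    obtain ⟨f, hf, rfl⟩ := mem_image.1 hq
    have hi : i ∉ e f := notMem_erase i _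
    simp only [traceCount_update_of_notMem ℱ σ hi, traceCount_update_insert ℱ σ hi]
    obtain ⟨m, hm⟩ := exists_sum_min_card_filter_mem_eq (X := X)
      (ℱ := {g ∈ ℱ | e g = e f}) fun g hg ↦ hX g (mem_filter.1 hg).1
    rw [hm]
    exact mul_card_sub_one_le_sum_card_symmDiff (ℱ := {g ∈ ℱ | e g = e f})
      ⟨f, mem_filter.2 ⟨hf, rfl⟩⟩
      (hD.mono (coe_subset.2 (filter_subset _ _))) m
  have hsubset : ℱ.image e ⊆ (univ.erase i).powerset := fun q hq ↦ by
    obtain ⟨f, -, rfl⟩ := mem_image.1 hq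
    exact mem_powerset.2 (erase_subset_erase i (subset_univ _))
  calc D * (#ℱ - #(ℱ.image e)) = ∑ q ∈ ℱ.image e, D * ((#{f ∈ ℱ | e f = q} : ℝ) - 1) := by
        rw [← mul_sum, sum_sub_distrib, card_eq_sum_card_image e ℱ, sum_const, nsmul_one,
          Nat.cast_sum]
    _ ≤ ∑ q ∈ ℱ.image e, 2 * ((∑ a ∈ X, min (traceCount ℱ (Function.update σ i a) q)
          (traceCount ℱ (Function.update σ i a) (insert i q)) : ℕ) : ℝ) := sum_le_sum hclass
    _ ≤ 2 * (∑ a ∈ X, edgeWeight ℱ (Function.update σ i a) i : ℕ) := by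
        rw [← mul_sum, ← Nat.cast_sum, sum_comm]
        gcongr with a
        exact sum_le_sum_of_subset hsubset

end Sampling

end SetFamily

section Packing

open Finset
open scoped Nat

variable {α : Type*} [DecidableEq α]

/-- Both bounds come from averaging `edgeWeight` over all samples from `X` and all directions: from
above by the one-inclusion graph inequality, and from below because resampling one coordinate
separates the many members of `ℱ` that share their trace on the others. -/
theorem mul_card_sub_sum_choose_le {ι : Type*} [Fintype ι] {ℱ : Finset (Finset α)}
    {X : Finset α} {D : ℝ} (hXne : X.Nonempty) (hX : ∀ f ∈ ℱ, f ⊆ X) (hD0 : 0 ≤ D)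
    (hD : (ℱ : Set (Finset α)).Pairwise fun f g ↦ D ≤ #(f ∆ g)) {d : ℕ} (hd : ℱ.vcDim ≤ d) :
    Fintype.card ι * (D * (#ℱ - ∑ k ∈ Iic d, (Fintype.card ι).choose k : ℝ)) ≤
      2 * (#X * (d * #ℱ)) := by
  classical
  set C : ℕ := ∑ k ∈ Iic d, (Fintype.card ι).choose k
  let P : Finset (ι → α) := Fintype.piFinset fun _ ↦ X
  have hP : (0 : ℝ) < #P := by
    exact_mod_cast card_pos.2 (Fintype.piFinset_nonempty.2 fun _ ↦ hXne)
  have hsauer (σ : ι → α) (i : ι) : #(ℱ.image fun f ↦ (sampleTrace σ f).erase i) ≤ C := by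
    refine card_le_sum_choose_of_vcDim_le (le_trans ?_ hd)
    rw [← Function.comp_def (fun q : Finset ι ↦ q.erase i), ← image_image]
    exact (vcDim_image_erase_le _ i).trans (vcDim_image_sampleTrace_le ℱ σ)
  have hupper (σ : ι → α) : ∑ i, edgeWeight ℱ σ i ≤ d * #ℱ :=
    (sum_edgeWeight_le ℱ σ).trans (Nat.mul_le_mul_right _ hd)
  have hlower (σ : ι → α) (i : ι) :
      D * (#ℱ - C : ℝ) ≤ 2 * (∑ a ∈ X, edgeWeight ℱ (Function.update σ i a) i : ℕ) :=
    (mul_le_mul_of_nonneg_left (sub_le_sub_left (mod_cast hsauer σ i) _) hD0).trans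
      (mul_card_sub_card_image_le_sum_edgeWeight hX hD σ i)
  have hresample : ∑ σ ∈ P, ∑ i, ∑ a ∈ X, edgeWeight ℱ (Function.update σ i a) i =
      #X * ∑ σ ∈ P, ∑ i, edgeWeight ℱ σ i := by
    rw [sum_comm, sum_comm (s := P), mul_sum]
    exact sum_congr rfl fun i _ ↦ sum_piFinset_sum_update X i fun σ ↦ edgeWeight ℱ σ i
  refine le_of_mul_le_mul_left ?_ hP
  calc #P * (Fintype.card ι * (D * (#ℱ - C : ℝ)))
      = ∑ _ ∈ P, ∑ _ : ι, D * (#ℱ - C : ℝ) := by simp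
    _ ≤ ∑ σ ∈ P, ∑ i, 2 * ((∑ a ∈ X, edgeWeight ℱ (Function.update σ i a) i : ℕ) : ℝ) := by
        exact sum_le_sum fun σ _ ↦ sum_le_sum fun i _ ↦ hlower σ i
    _ = 2 * (#X * ∑ σ ∈ P, ∑ i, edgeWeight ℱ σ i : ℕ) := by
        rw [← hresample]
        push_cast
        simp only [mul_sum]
    _ ≤ 2 * (#X * ∑ _ ∈ P, d * #ℱ : ℕ) := by
        gcongr with σ
        exact hupper σ
    _ = #P * (2 * (#X * (d * #ℱ))) := by
        simp only [sum_const, smul_eq_mul]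
        push_cast
        ring

lemma sum_choose_le_exp_mul_pow {s d : ℕ} {y : ℝ} (hy : 1 ≤ y) (hs : s ≤ d * y) :
    (∑ k ∈ Iic d, s.choose k : ℕ) ≤ (Real.exp 1 * y) ^ d := by
  have hchoose (k : ℕ) (hk : k ∈ Iic d) : (s.choose k : ℝ) ≤ y ^ d * ((d : ℝ) ^ k / k !) :=
    calc (s.choose k : ℝ) ≤ (s : ℝ) ^ k / k ! := Nat.choose_le_pow_div k s
      _ ≤ (d * y) ^ k / k ! := by gcongr
      _ = y ^ k * ((d : ℝ) ^ k / k !) := by rw [mul_pow]; ring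
      _ ≤ y ^ d * ((d : ℝ) ^ k / k !) := by
          gcongr
          exact mem_Iic.1 hk
  calc ((∑ k ∈ Iic d, s.choose k : ℕ) : ℝ) ≤ ∑ k ∈ Iic d, y ^ d * ((d : ℝ) ^ k / k !) := by
        rw [Nat.cast_sum]
        exact sum_le_sum hchoose
    _ ≤ y ^ d * Real.exp d := by
        rw [← mul_sum, ← Nat.range_succ_eq_Iic]
        gcongr
        exact Real.sum_le_exp_of_nonneg d.cast_nonneg _
    _ = (Real.exp 1 * y) ^ d := by rw [mul_pow, ← Real.exp_nat_mul, mul_one, mul_comm]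

/-- Haussler's packing theorem. With `x = #X / D` and `⌈4dx⌉` samples,
`mul_card_sub_sum_choose_le` says that at least half of the members of `ℱ` are accounted for by
their traces. -/
theorem card_le_pow_of_pairwise_le_card_symmDiff {ℱ : Finset (Finset α)} {X : Finset α} {D : ℝ}
    (hX : ∀ f ∈ ℱ, f ⊆ X) (hD0 : 0 < D) (hDX : D ≤ #X)
    (hD : (ℱ : Set (Finset α)).Pairwise fun f g ↦ D ≤ #(f ∆ g)) {d : ℕ} (hd : ℱ.vcDim ≤ d)
    (hd0 : d ≠ 0) : (#ℱ : ℝ) ≤ (30 * (#X / D)) ^ d := by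
  set x : ℝ := #X / D
  have hx : 1 ≤ x := (one_le_div hD0).2 hDX
  have hXne : X.Nonempty := card_pos.1 (mod_cast hD0.trans_le hDX)
  have hd1 : (1 : ℝ) ≤ d := mod_cast Nat.one_le_iff_ne_zero.2 hd0
  set s : ℕ := ⌈4 * d * x⌉₊
  set C : ℕ := ∑ k ∈ Iic d, s.choose k
  have hs_ge : 4 * d * x ≤ s := Nat.le_ceil _
  have hs_le : s ≤ d * (5 * x) := by
    have hdx : 1 ≤ d * x := one_le_mul_of_one_le_of_one_le hd1 hx
    linarith [Nat.ceil_lt_add_one (a := 4 * d * x) (by positivity)]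
  have hsample : (s * D) * (#ℱ - C : ℝ) ≤ (s * D) * (#ℱ / 2) := by
    have h := mul_card_sub_sum_choose_le (ι := Fin s) hXne hX hD0.le hD hd
    rw [Fintype.card_fin] at h
    calc (s * D) * (#ℱ - C : ℝ) = s * (D * (#ℱ - C)) := mul_assoc ..
      _ ≤ 2 * (#X * (d * #ℱ)) := mod_cast h
      _ = (4 * d * x * D) * (#ℱ / 2) := by
          rw [show (#X : ℝ) = x * D from (div_mul_cancel₀ _ hD0.ne').symm]
          ring
      _ ≤ (s * D) * (#ℱ / 2) := by gcongr
  have hsD : 0 < s * D := mul_pos (hs_ge.trans_lt' (by positivity)) hD0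
  have hhalf : (#ℱ : ℝ) ≤ 2 * C := by linarith [le_of_mul_le_mul_left hsample hsD]
  calc (#ℱ : ℝ) ≤ 2 * (Real.exp 1 * (5 * x)) ^ d := by
        linarith [sum_choose_le_exp_mul_pow (by linarith) hs_le]
    _ ≤ 2 ^ d * (3 * (5 * x)) ^ d := by
        gcongr
        exacts [le_self_pow₀ one_le_two hd0, Real.exp_one_lt_three.le]
    _ = (30 * x) ^ d := by rw [← mul_pow]; ring

end Packing

lemma finset_vcDim_le_vcDim {α : Type*} [DecidableEq α] {ℱ : Finset (Finset α)} {F : Set (Set α)}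
    (h : ∀ f ∈ ℱ, (f : Set α) ∈ F) : (ℱ.vcDim : ℕ∞) ≤ vcDim F := by
  rw [Finset.vcDim, Finset.apply_sup_eq_sup_comp_of_linearOrder Nat.cast Nat.mono_cast rfl]
  refine Finset.sup_le fun s hs ↦ le_iSup₂_of_le s (fun T hT ↦ ?_) le_rfl
  lift T to Finset α using s.finite_toSet.subset hT
  obtain ⟨f, hf, hfT⟩ := Finset.mem_shatterer.1 hs (Finset.coe_subset.1 hT)
  exact ⟨f, h f hf, by rw [← Finset.coe_inter, hfT]⟩

section Stabilizer

variable {G : Type*} [Group G] {A C : Set G} {δ η : ℝ} {d : ℕ}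

lemma inv_mul_mem_stL {x y : G} :
    x⁻¹ * y ∈ stL A δ ↔ (((x • A) ∆ (y • A)).ncard : ℝ) ≤ δ * A.ncard := by
  rw [← Set.ncard_smul_set x⁻¹, Set.smul_set_symmDiff, smul_smul, smul_smul, inv_mul_cancel,
    one_smul, symmDiff_comm]
  rfl

lemma one_mem_stL (hδ : 0 ≤ δ) : (1 : G) ∈ stL A δ := by
  rw [← inv_mul_cancel (1 : G), inv_mul_mem_stL, symmDiff_self, Set.bot_eq_empty, Set.ncard_empty,
    Nat.cast_zero]
  positivity

lemma inv_stL (A : Set G) (δ : ℝ) : (stL A δ)⁻¹ = stL A δ := by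
  ext x
  rw [Set.mem_inv, ← mul_one x⁻¹, inv_mul_mem_stL, symmDiff_comm, ← inv_mul_mem_stL, inv_one,
    one_mul]

lemma stL_mono (h : δ ≤ η) : stL A δ ⊆ stL A η := fun _ hx ↦
  le_trans hx (mul_le_mul_of_nonneg_right h A.ncard.cast_nonneg)

lemma stL_mul_stL_subset (hA : A.Finite) : stL A δ * stL A η ⊆ stL A (δ + η) := by
  rintro _ ⟨x, hx, y, hy, rfl⟩
  rw [← inv_inv x, inv_mul_mem_stL]
  have hx' := (inv_stL A δ).ge hx
  have hfin : ((x⁻¹ • A) ∆ A ∪ A ∆ (y • A)).Finite :=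
    (hA.smul_set.symmDiff hA).union (hA.symmDiff hA.smul_set)
  have htri : ((x⁻¹ • A) ∆ (y • A)).ncard ≤ ((x⁻¹ • A) ∆ A).ncard + (A ∆ (y • A)).ncard :=
    (Set.ncard_le_ncard (symmDiff_triangle _ _ _) hfin).trans (Set.ncard_union_le _ _)
  rw [symmDiff_comm A] at htri
  calc (((x⁻¹ • A) ∆ (y • A)).ncard : ℝ)
      ≤ ((x⁻¹ • A) ∆ A).ncard + ((y • A) ∆ A).ncard := mod_cast htri
    _ ≤ δ * A.ncard + η * A.ncard := add_le_add hx' hy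
    _ = (δ + η) * A.ncard := (add_mul ..).symm

lemma stL_pow_subset (hA : A.Finite) (n : ℕ) : stL A δ ^ n ⊆ stL A (n * δ) := by
  induction n with
  | zero => simpa using one_mem_stL (A := A) le_rfl
  | succ n ih =>
    rw [pow_succ, Nat.cast_succ, add_one_mul]
    exact (Set.mul_subset_mul_right ih).trans (stL_mul_stL_subset hA)

lemma stL_subset_mul_inv (hA : A.Finite) (hAne : A.Nonempty) (hδ : δ < 2) :
    stL A δ ⊆ A * A⁻¹ := by
  intro x hx
  suffices h : ¬ Disjoint (x • A) A by
    obtain ⟨_, ⟨a, ha, rfl⟩, hb⟩ := Set.not_disjoint_iff.1 h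
    exact ⟨x * a, hb, a⁻¹, Set.inv_mem_inv.2 ha, mul_inv_cancel_right x a⟩
  intro h
  have hcard : ((x • A) ∆ A).ncard = 2 * A.ncard := by
    rw [h.symmDiff_eq_sup, two_mul]
    exact (Set.ncard_union_eq h hA.smul_set hA).trans (by rw [Set.ncard_smul_set])
  have hle : (((x • A) ∆ A).ncard : ℝ) ≤ δ * A.ncard := hx
  rw [hcard, Nat.cast_mul, Nat.cast_two] at hle
  exact hle.not_gt (mul_lt_mul_of_pos_right hδ (mod_cast (Set.ncard_pos hA).2 hAne))

lemma finite_stL (hA : A.Finite) (hAne : A.Nonempty) (hδ : δ < 2) : (stL A δ).Finite :=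
  (hA.mul hA.inv).subset (stL_subset_mul_inv hA hAne hδ)

lemma exists_finset_pairwise_inv_mul_notMem_and_subset_mul {S : Set G} (hC : C.Finite)
    (hone : 1 ∈ S) (hinv : S⁻¹ = S) :
    ∃ T : Finset G, (T : Set G) ⊆ C ∧ (T : Set G).Pairwise (fun x y ↦ x⁻¹ * y ∉ S) ∧
      C ⊆ T * S := by
  let U : SetRel G G := {p | p.1⁻¹ * p.2 ∈ S}
  have : U.IsRefl := ⟨fun x ↦ by simpa [U] using hone⟩
  have : U.IsSymm := ⟨fun x y hxy ↦ by
    have hmem : (x⁻¹ * y)⁻¹ ∈ S := by rwa [← Set.mem_inv, hinv]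
    simpa [U] using hmem⟩
  have hfin : {T | T ⊆ C ∧ U.IsSeparated T}.Finite := hC.finite_subsets.subset fun _ hT ↦ hT.1
  obtain ⟨T, hT⟩ := hfin.exists_maximal ⟨∅, C.empty_subset, .empty⟩
  lift T to Finset G using hC.subset hT.1.1
  refine ⟨T, hT.1.1, hT.1.2, fun x hx ↦ ?_⟩
  obtain ⟨y, hy, hxy⟩ := SetRel.IsCover.of_maximal_isSeparated hT hx
  exact ⟨y, hy, y⁻¹ * x, U.symm hxy, mul_inv_cancel_left y x⟩

theorem card_le_pow_of_pairwise_inv_mul_notMem_stL (hA : A.Finite) (hAne : A.Nonempty)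
    (hC : C.Finite) (hCne : C.Nonempty) (hd : vcDim (leftFam A C) ≤ d) (hd0 : d ≠ 0)
    (hδ0 : 0 < δ) (hδ1 : δ ≤ 1) {T : Finset G} (hTC : (T : Set G) ⊆ C)
    (hT : (T : Set G).Pairwise fun x y ↦ x⁻¹ * y ∉ stL A δ) :
    (T.card : ℝ) ≤ (30 * ((C * A).ncard / A.ncard / δ)) ^ d := by
  classical
  lift A to Finset G using hA
  lift C to Finset G using hC
  have hfar : (T : Set G).Pairwise fun x y ↦ δ * A.card < ((x • A) ∆ (y • A)).card :=
    fun x hx y hy hxy ↦ by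
      have h := inv_mul_mem_stL.not.1 (hT hx hy hxy)
      rwa [← Finset.coe_smul_finset, ← Finset.coe_smul_finset, ← Finset.coe_symmDiff,
        Set.ncard_coe_finset, Set.ncard_coe_finset, not_le] at h
  have hinj : Set.InjOn (fun x : G ↦ x • A) T := fun x hx y hy hxy ↦ by
    by_contra hne
    have hlt : δ * A.card < ((x • A) ∆ (y • A)).card := hfar hx hy hne
    rw [show x • A = y • A from hxy, symmDiff_self, Finset.bot_eq_empty, Finset.card_empty,
      Nat.cast_zero] at hlt
    exact hlt.not_ge (by positivity)
  have hvc : (T.image fun x ↦ x • A).vcDim ≤ d := by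
    refine Nat.cast_le.1 ((finset_vcDim_le_vcDim fun f hf ↦ ?_).trans hd)
    obtain ⟨x, hx, rfl⟩ := Finset.mem_image.1 hf
    exact ⟨x, hTC hx, (Finset.coe_smul_finset x A).symm⟩
  have hAcard : (0 : ℝ) < A.card := mod_cast Finset.card_pos.2 hAne
  have hle : δ * A.card ≤ (C * A).card := by
    have h : (A.card : ℝ) ≤ (C * A).card := mod_cast Finset.card_le_card_mul_left hCne
    exact (mul_le_of_le_one_left hAcard.le hδ1).trans h
  rw [← Finset.card_image_of_injOn hinj, ← Finset.coe_mul, Set.ncard_coe_finset,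
    Set.ncard_coe_finset, div_div, mul_comm _ δ]
  refine card_le_pow_of_pairwise_le_card_symmDiff (fun f hf ↦ ?_) (mul_pos hδ0 hAcard) hle ?_
    hvc hd0
  · obtain ⟨x, hx, rfl⟩ := Finset.mem_image.1 hf
    exact Finset.smul_finset_subset_mul (hTC hx)
  · rw [Finset.coe_image]
    exact (hinj.pairwise_image).2 (hfar.mono' fun _ _ ↦ le_of_lt)

theorem ncard_le_pow_mul_ncard_stL (hA : A.Finite) (hAne : A.Nonempty)
    (hC : C.Finite) (hCne : C.Nonempty) (hd : vcDim (leftFam A C) ≤ d) (hd0 : d ≠ 0)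
    (hδ0 : 0 < δ) (hδ1 : δ ≤ 1) :
    (C.ncard : ℝ) ≤ (30 * ((C * A).ncard / A.ncard / δ)) ^ d * (stL A δ).ncard := by
  obtain ⟨T, hTC, hT, hcover⟩ := exists_finset_pairwise_inv_mul_notMem_and_subset_mul hC
    (one_mem_stL hδ0.le) (inv_stL A δ)
  have hfin : (stL A δ).Finite := finite_stL hA hAne (by linarith)
  have hcard : C.ncard ≤ T.card * (stL A δ).ncard := by
    rw [← Set.ncard_coe_finset T]
    exact (Set.ncard_le_ncard hcover (T.finite_toSet.mul hfin)).trans Set.natCard_mul_le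
  calc (C.ncard : ℝ) ≤ T.card * (stL A δ).ncard := mod_cast hcard
    _ ≤ _ := by
        gcongr
        exact card_le_pow_of_pairwise_inv_mul_notMem_stL hA hAne hC hCne hd hd0 hδ0 hδ1 hTC hT

end Stabilizer

section Scales

lemma exists_le_mul_succ_and_pow_mul_le {t : ℕ → ℝ} {q : ℝ} (hq : 1 < q) (ht : ∀ j, 1 ≤ t j) :
    ∃ J, t J ≤ q * t (J + 1) ∧ q ^ J * t J ≤ t 0 := by
  have hq0 : 0 < q := one_pos.trans hq
  have hgeom (J : ℕ) (hJ : ∀ j < J, q * t (j + 1) < t j) : q ^ J * t J ≤ t 0 := by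
    rw [← le_inv_mul_iff₀ (pow_pos hq0 J), ← inv_pow]
    exact le_geom (inv_nonneg.2 hq0.le) J fun j hj ↦ (le_inv_mul_iff₀ hq0).2 (hJ j hj).le
  have hex : ∃ J, t J ≤ q * t (J + 1) := by
    by_contra! h
    obtain ⟨J, hJ⟩ := pow_unbounded_of_one_lt (t 0) hq
    have := le_mul_of_one_le_right (pow_pos hq0 J).le (ht J)
    linarith [hgeom J fun j _ ↦ h j]
  classical
  exact ⟨Nat.find hex, Nat.find_spec hex, hgeom _ fun j hj ↦ not_le.1 (Nat.find_min hex hj)⟩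

lemma le_rpow_inv_mul_of_pow_le_mul_pow {d : ℕ} (hd : d ≠ 0) {x y m : ℝ} (hy : 0 ≤ y) (hm : 0 ≤ m)
    (h : x ^ d ≤ m * y ^ d) : x ≤ m ^ (d : ℝ)⁻¹ * y := by
  refine le_of_pow_le_pow_left₀ hd (by positivity) ?_
  rwa [mul_pow, Real.rpow_inv_natCast_pow hm hd]

lemma exists_le_mul_succ_and_le_rpow_inv_mul {d : ℕ} (hd : d ≠ 0) {t : ℕ → ℝ} {c m r u : ℝ}
    (hu : 1 < u) (hm : 0 ≤ m) (hr : 0 ≤ r) (ht : ∀ j, 1 ≤ t j) (hzero : t 0 ≤ m * c)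
    (hc : ∀ j, c ≤ (r * u ^ j) ^ d * t j) :
    ∃ J, t J ≤ u ^ (d * (d + 1)) * t (J + 1) ∧
      c ≤ m ^ (d : ℝ)⁻¹ * (r * u) ^ (d + 1) * t (J + 1) := by
  have hq : 1 < u ^ (d * (d + 1)) := one_lt_pow₀ hu (mul_ne_zero hd d.succ_ne_zero)
  obtain ⟨J, hJ, hgeom⟩ := exists_le_mul_succ_and_pow_mul_le hq ht
  refine ⟨J, hJ, ?_⟩
  have hu0 : 0 < u := one_pos.trans hu
  have htpos (j : ℕ) : 0 < t j := one_pos.trans_le (ht j)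
  have hpow : (u ^ J) ^ (d * (d + 1)) ≤ m * (r * u ^ J) ^ d := by
    refine le_of_mul_le_mul_right ?_ (htpos J)
    calc (u ^ J) ^ (d * (d + 1)) * t J = (u ^ (d * (d + 1))) ^ J * t J := by rw [pow_right_comm]
      _ ≤ m * c := hgeom.trans hzero
      _ ≤ m * ((r * u ^ J) ^ d * t J) := by gcongr; exact hc J
      _ = m * (r * u ^ J) ^ d * t J := (mul_assoc ..).symm
  have hscale : (u ^ J) ^ d ≤ m ^ (d : ℝ)⁻¹ * r := by
    refine le_rpow_inv_mul_of_pow_le_mul_pow hd hr hm ?_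
    refine le_of_mul_le_mul_right ?_ (pow_pos (pow_pos hu0 J) d)
    calc ((u ^ J) ^ d) ^ d * (u ^ J) ^ d = (u ^ J) ^ (d * (d + 1)) := by ring
      _ ≤ m * r ^ d * (u ^ J) ^ d := by rwa [mul_assoc, ← mul_pow]
  calc c ≤ (r * u ^ (J + 1)) ^ d * t (J + 1) := hc (J + 1)
    _ = (u ^ J) ^ d * ((r * u) ^ d * t (J + 1)) := by ring
    _ ≤ m ^ (d : ℝ)⁻¹ * r * ((r * u) ^ d * t (J + 1)) := by
        have := (htpos (J + 1)).le
        gcongr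
    _ ≤ m ^ (d : ℝ)⁻¹ * (r * u) * ((r * u) ^ d * t (J + 1)) := by
        have := (htpos (J + 1)).le
        gcongr
        exact le_mul_of_one_le_right hr hu.le
    _ = m ^ (d : ℝ)⁻¹ * (r * u) ^ (d + 1) * t (J + 1) := by ring

end Scales

theorem exists_ncard_stL_le_mul_and_ncard_le_mul_ncard_stL {G : Type*} [Group G] {A C : Set G}
    (hA : A.Finite) (hAne : A.Nonempty) (hC : C.Finite) (hCne : C.Nonempty) {d : ℕ}
    (hd : vcDim (leftFam A C) ≤ d) (hd0 : d ≠ 0) {η u : ℝ} (hη0 : 0 < η) (hη1 : η ≤ 1)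
    (hu : 1 < u) :
    ∃ J : ℕ, ((stL A (η / u ^ J)).ncard : ℝ) ≤
        u ^ (d * (d + 1)) * (stL A (η / u ^ (J + 1))).ncard ∧
      (C.ncard : ℝ) ≤ ((A * A⁻¹).ncard / C.ncard : ℝ) ^ (d : ℝ)⁻¹ *
        (30 * ((C * A).ncard / A.ncard / η) * u) ^ (d + 1) * (stL A (η / u ^ (J + 1))).ncard := by
  have hδ0 (j : ℕ) : 0 < η / u ^ j := div_pos hη0 (by positivity)
  have hδ1 (j : ℕ) : η / u ^ j ≤ 1 := (div_le_self hη0.le (one_le_pow₀ hu.le)).trans hη1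
  have hδ2 (j : ℕ) : η / u ^ j < 2 := (hδ1 j).trans_lt one_lt_two
  refine exists_le_mul_succ_and_le_rpow_inv_mul (t := fun j ↦ (stL A (η / u ^ j)).ncard) hd0 hu
    (by positivity) (by positivity) (fun j ↦ ?_) ?_ fun j ↦ ?_
  · have hpos := (Set.ncard_pos (finite_stL hA hAne (hδ2 j))).2 ⟨1, one_mem_stL (hδ0 j).le⟩
    exact_mod_cast hpos
  · have hCpos : (0 : ℝ) < C.ncard := mod_cast (Set.ncard_pos hC).2 hCne
    rw [div_mul_cancel₀ _ hCpos.ne']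
    exact_mod_cast Set.ncard_le_ncard (stL_subset_mul_inv hA hAne (hδ2 0)) (hA.mul hA.inv)
  · refine (ncard_le_pow_mul_ncard_stL hA hAne hC hCne hd hd0 (hδ0 j) (hδ1 j)).trans_eq ?_
    rw [← div_mul, mul_assoc]

theorem afz_trick_general {G : Type*} [Group G] (A C : Set G)
    (hA : A.Finite) (hAne : A.Nonempty) (hC : C.Finite) (hCne : C.Nonempty)
    (d : ℕ) (hd : vcDim (leftFam A C) ≤ d) (hd1 : 1 ≤ d)
    (n u : ℕ) (hu : 2 ≤ u) (hun : u ≤ n) (ε : ℝ) (hε0 : 0 < ε) (hε1 : ε ≤ 1) :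
    ∃ B : Set G, B.Finite ∧ B⁻¹ = B ∧ (1 : G) ∈ B ∧
      ((B ^ u).ncard : ℝ) ≤ (u : ℝ) ^ (d * (d + 1)) * B.ncard ∧
      B ^ n ⊆ stL A ε ∧
      (C.ncard : ℝ) ≤ (((A * A⁻¹).ncard : ℝ) / C.ncard) ^ ((d : ℝ)⁻¹) *
        (30 * (((C * A).ncard : ℝ) / A.ncard) * n / ε) ^ (d + 1) * B.ncard := by
  have hu1 : (1 : ℝ) < u := mod_cast hu
  have hun' : (u : ℝ) ≤ n := mod_cast hun
  have hn0 : (0 : ℝ) < n := by linarith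
  set η : ℝ := u * ε / n
  have hη0 : 0 < η := by positivity
  have hηε : η ≤ ε := by
    rw [div_le_iff₀ hn0, mul_comm]
    gcongr
  have hη1 : η ≤ 1 := hηε.trans hε1
  have hδ2 (j : ℕ) : η / u ^ j < 2 :=
    (div_le_self hη0.le (one_le_pow₀ hu1.le)).trans_lt (hη1.trans_lt one_lt_two)
  obtain ⟨J, hJ, hcard⟩ := exists_ncard_stL_le_mul_and_ncard_le_mul_ncard_stL hA hAne hC hCne hd
    (Nat.one_le_iff_ne_zero.1 hd1) hη0 hη1 hu1
  refine ⟨stL A (η / u ^ (J + 1)), finite_stL hA hAne (hδ2 _), inv_stL ..,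
    one_mem_stL (by positivity), ?_, ?_, ?_⟩
  · have hpow : stL A (η / u ^ (J + 1)) ^ u ⊆ stL A (η / u ^ J) :=
      (stL_pow_subset hA u).trans (stL_mono (le_of_eq (by rw [pow_succ]; field_simp)))
    refine le_trans ?_ hJ
    exact_mod_cast Set.ncard_le_ncard hpow (finite_stL hA hAne (hδ2 J))
  · refine (stL_pow_subset hA n).trans (stL_mono ?_)
    calc n * (η / u ^ (J + 1)) = ε / u ^ J := by simp only [η, pow_succ]; field_simp
      _ ≤ ε := div_le_self hε0.le (one_le_pow₀ hu1.le)
  · convert hcard using 4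
    simp only [η]
    field_simp

/-- Lemma 5.1 of the paper, case (1): with `d = VC^ℓ_A(A) ≥ 1`,
`k = |A²|/|A|` and `m = |AA⁻¹|/|A|`, for integers `n ≥ u ≥ 2` and `ε ∈ (0,1)` there is a
symmetric `B` with `|B^u| ≤ u^{d(d+1)}|B|`, `B^n ⊆ St^ℓ_ε(A)`, and
`|A| ≤ m^{1/d}(30kn/ε)^{d+1}|B|`. -/
theorem afz_trick {G : Type*} [Group G] (A : Set G)
    (hA : A.Finite) (hAne : A.Nonempty)
    (d : ℕ) (hd : vcDim (leftFam A A) = (d : ℕ∞)) (hd1 : 1 ≤ d)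
    (n u : ℕ) (hu : 2 ≤ u) (hun : u ≤ n)
    (ε : ℝ) (hε0 : 0 < ε) (hε1 : ε < 1) :
    ∃ B : Set G, B.Finite ∧ B⁻¹ = B ∧ (1 : G) ∈ B ∧
      ((B ^ u).ncard : ℝ) ≤ (u : ℝ) ^ (d * (d + 1)) * B.ncard ∧
      B ^ n ⊆ stL A ε ∧
      (A.ncard : ℝ) ≤ (((A * A⁻¹).ncard : ℝ) / A.ncard) ^ ((d : ℝ)⁻¹) *
        (30 * (((A * A).ncard : ℝ) / A.ncard) * n / ε) ^ (d + 1) * B.ncard :=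
  afz_trick_general A A hA hAne hA hAne d hd.le hd1 n u hu hun ε hε0 hε1.le
end
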